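/- Let P and Q be compact metric spaces with dim P = dim Q = 2 and dim(P × Q) = 3, such that P, Q and P × Q are all of basic type (for instance the Pontryagin surfaces). Let σ₁: P^ℤ → P^ℤ and σ₂: Q^ℤ → Q^ℤ be the full shifts. Then mdim(P^ℤ, σ₁) = mdim(Q^ℤ, σ₂) = 2 and mdim(P^ℤ × Q^ℤ, σ₁ × σ₂) = 3; in particular mdim(P^ℤ × Q^ℤ, σ₁ × σ₂) < mdim(P^ℤ, σ₁) + mdim(Q^ℤ, σ₂), so the general inequality mdim(X × Y, T × S) ≤ mdim(X,T) + mdim(Y,S) can be strict. -/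

import Mathlib

open Filter Set
open scoped ENNReal

namespace MeanDimPaper

variable {X : Type*} [TopologicalSpace X]

/-- `α` is an open cover of `X`. -/
def IsOpenCover (α : Set (Set X)) : Prop :=
  (∀ U ∈ α, IsOpen U) ∧ ⋃₀ α = Set.univ

/-- The order of a cover `α`: the maximum `n ≥ 0` such that there exist `n + 1`
pairwise distinct members of `α` with nonempty common intersection. -/
noncomputable def ord (α : Set (Set X)) : ℕ∞ :=
  ⨆ n ∈ {n : ℕ | ∃ f : Fin (n + 1) → Set X,
      Function.Injective f ∧ (∀ i, f i ∈ α) ∧ (⋂ i, f i).Nonempty}, (n : ℕ∞)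

/-- `β` refines `α`: every member of `β` is contained in some member of `α`. -/
def Refines (β α : Set (Set X)) : Prop := ∀ V ∈ β, ∃ U ∈ α, V ⊆ U

/-- `D(α)`: the minimum of `ord β` over open covers `β` refining `α`. -/
noncomputable def covD (α : Set (Set X)) : ℕ∞ :=
  ⨅ β ∈ {β : Set (Set X) | IsOpenCover β ∧ Refines β α}, ord β

/-- Topological (covering) dimension: the supremum of `D(α)` over open covers `α`. -/
noncomputable def topDim (X : Type*) [TopologicalSpace X] : ℕ∞ :=
  ⨆ α ∈ {α : Set (Set X) | IsOpenCover α}, covD α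

/-- Diameter of a set with respect to a distance function `d`. -/
noncomputable def diamD (d : X → X → ℝ) (U : Set X) : ℝ :=
  sSup {r | ∃ x ∈ U, ∃ y ∈ U, r = d x y}

/-- Mesh of a cover: the supremum of the diameters of its members. -/
noncomputable def mesh (d : X → X → ℝ) (α : Set (Set X)) : ℝ :=
  sSup (diamD d '' α)

/-- `widim_ε(X, d)`: the minimum of `D(α)` over open covers `α` with `mesh(α, d) < ε`. -/
noncomputable def widim (ε : ℝ) (d : X → X → ℝ) : ℕ∞ :=
  ⨅ α ∈ {α : Set (Set X) | IsOpenCover α ∧ mesh d α < ε}, covD α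

/-- `d` is a metric on `X` compatible with the topology of `X`. -/
structure IsCompatMetric {X : Type*} [TopologicalSpace X] (d : X → X → ℝ) : Prop where
  refl : ∀ x, d x x = 0
  eq_of : ∀ x y, d x y = 0 → x = y
  symm : ∀ x y, d x y = d y x
  triangle : ∀ x y z, d x z ≤ d x y + d y z
  isOpen_iff : ∀ U : Set X, IsOpen U ↔ ∀ x ∈ U, ∃ ε > 0, ∀ y, d x y < ε → y ∈ U

/-- The dynamical distance `d_n(x, y) = max_{0 ≤ i < n} d(Tⁱ x, Tⁱ y)`. -/
noncomputable def dynDist (d : X → X → ℝ) (T : X → X) (n : ℕ) (x y : X) : ℝ :=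
  sSup {r | ∃ i < n, r = d (T^[i] x) (T^[i] y)}

/-- Mean dimension `mdim(X, T)` computed with the metric `d`:
`lim_{ε → 0} lim_{n → ∞} widim_ε(X, d_n) / n`.  The inner limit exists (by
subadditivity of `n ↦ widim_ε(X, d_n)`) so it coincides with the liminf, and the inner
quantity is monotone as `ε` decreases, so the limit as `ε → 0` is the supremum over
`ε > 0`. -/
noncomputable def mdim (T : X → X) (d : X → X → ℝ) : ℝ≥0∞ :=
  ⨆ (ε : ℝ) (_ : 0 < ε),
    Filter.liminf (fun n : ℕ => (widim ε (dynDist d T n) : ℝ≥0∞) / (n : ℝ≥0∞)) Filter.atTop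

/-- The full shift `σ` on the alphabet `K`: `σ((xₙ)ₙ) = (xₙ₊₁)ₙ`. -/
def shift (K : Type*) : (ℤ → K) → ℤ → K := fun x n => x (n + 1)

/-!
Upper bounds: a space of dimension `k` maps with small fibres to a simplicial complex of dimension
`k`, so `n` coordinates of the full shift on it cost at most `k * n`.

Lower bounds: real functions `g₁, …, gₖ` on `K` are essential over a field `F` if the cup product of
the classes `d[gᵢ ≤ 0]`, relative to the sets where some `gᵢ` is far from `0`, is nonzero in a
small-scale Alexander–Spanier cohomology over `F`. Such a family forces every cover on which the
`gᵢ` vary little to have order at least `k`, and by a Künneth argument over `F` its powers and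
products stay essential; hence `mdim (shift K) ≥ k`.

If no field gave an essential pair on a surface `P`, then `dim (P × P) ≤ 3`. Inessentiality over `ℚ`
lets some power `f' ^ d` of each `f' : P → ℂ` be deformed off `0`, and inessentiality over `ZMod p`
lets each `f : P → ℂ` be replaced by a map with a `p`-th root near its zeros. A homotopy trades the
`p`-th power of one factor of `f × f'` for that of the other, so, one prime divisor of `d` at a
time, `f × f'` can be deformed off `0`. Hence a basic type surface has an essential pair, and its
product with one essential function of the other surface is an essential triple.
-/

section Covers

theorem ord_le_iff {Y : Type*} {β : Set (Set Y)} {m : ℕ} :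
    ord β ≤ m ↔ ∀ s : Finset (Set Y), ↑s ⊆ β → ∀ x, (∀ U ∈ s, x ∈ U) → s.card ≤ m + 1 := by
  simp only [ord, iSup₂_le_iff]
  constructor
  · intro h s hs x hx
    by_contra! hcard
    obtain ⟨n, hn⟩ : ∃ n, s.card = n + 1 := ⟨s.card - 1, by lia⟩
    let e := s.equivFinOfCardEq hn
    have hle : (n : ℕ∞) ≤ m := h n ⟨fun i => e.symm i,
      Subtype.val_injective.comp e.symm.injective, fun i => hs (e.symm i).2,
      x, mem_iInter.2 fun i => hx _ (e.symm i).2⟩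
    have := Nat.cast_le.1 hle
    lia
  · rintro h n ⟨f, hf, hfβ, x, hx⟩
    have hcard := h (Finset.univ.map ⟨f, hf⟩) (by simpa [range_subset_iff] using hfβ) x
      (by simpa using hx)
    simpa using hcard

theorem ord_image_preimage_le {Y Z : Type*} (f : Y → Z) (β : Set (Set Z)) :
    ord (preimage f '' β) ≤ ord β := by
  refine iSup₂_le ?_
  rintro n ⟨F, hF, hmem, y, hy⟩
  choose G hGβ hGF using hmem
  refine le_iSup₂_of_le n ⟨G, fun i j hij => hF ?_, hGβ, f y, mem_iInter.2 fun i => ?_⟩ le_rfl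
  · rw [← hGF i, ← hGF j, hij]
  · have := mem_iInter.1 hy i
    rwa [← hGF i] at this

theorem IsOpenCover.preimage {Y : Type*} [TopologicalSpace Y] {f : Y → X} (hf : Continuous f)
    {β : Set (Set X)} (hβ : IsOpenCover β) : IsOpenCover (preimage f '' β) := by
  refine ⟨forall_mem_image.2 fun V hV => (hβ.1 V hV).preimage hf, ?_⟩
  rw [sUnion_image, ← preimage_iUnion₂, ← sUnion_eq_biUnion, hβ.2, preimage_univ]

theorem covD_le_iff {α : Set (Set X)} {m : ℕ} :
    covD α ≤ m ↔ ∃ β, IsOpenCover β ∧ Refines β α ∧ ord β ≤ m := by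
  constructor
  · intro h
    have hlt := h.trans_lt (ENat.lt_add_one_iff (ENat.natCast_ne_top m) |>.2 le_rfl)
    simp only [covD, iInf_lt_iff] at hlt
    obtain ⟨β, ⟨hβ, hβα⟩, hord⟩ := hlt
    exact ⟨β, hβ, hβα, ENat.lt_add_one_iff (ENat.natCast_ne_top m) |>.1 hord⟩
  · rintro ⟨β, hβ, hβα, hord⟩
    exact (iInf₂_le β ⟨hβ, hβα⟩).trans hord

theorem topDim_le_iff {m : ℕ} :
    topDim X ≤ m ↔ ∀ α : Set (Set X), IsOpenCover α →
      ∃ β, IsOpenCover β ∧ Refines β α ∧ ord β ≤ m := by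
  simp only [topDim, iSup₂_le_iff, mem_ofPred_eq, covD_le_iff]

theorem topDim_le_zero_of_totallyDisconnected [CompactSpace X] [T2Space X]
    [TotallyDisconnectedSpace X] : topDim X ≤ 0 := by
  refine topDim_le_iff.2 fun α hα => ?_
  let U : α → TopologicalSpace.Opens X := fun V => ⟨V.1, hα.1 V.1 V.2⟩
  have hU : TopologicalSpace.IsOpenCover U :=
    TopologicalSpace.IsOpenCover.of_sets _ (by rw [← hα.2, sUnion_eq_iUnion])
  obtain ⟨n, W, hWU, hcov, hdisj⟩ := hU.exists_finite_nonempty_disjoint_clopen_cover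
  refine ⟨range fun j => (W j : Set X), ⟨?_, ?_⟩, ?_, ord_le_iff.2 fun s hs x hx => ?_⟩
  · exact forall_mem_range.2 fun j => (W j).isClopen.isOpen
  · rw [sUnion_range]
    exact univ_subset_iff.1 hcov
  · exact forall_mem_range.2 fun j => let ⟨V, hV⟩ := (hWU j).2; ⟨V.1, V.2, hV⟩
  · refine Finset.card_le_one.2 fun A hA B hB => ?_
    obtain ⟨i, rfl⟩ := hs hA
    obtain ⟨j, rfl⟩ := hs hB
    by_contra hij
    exact disjoint_left.1 (TopologicalSpace.Clopens.coe_disjoint.2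
      (hdisj (fun h => hij (by rw [h])))) (hx _ hA) (hx _ hB)

end Covers

section Simplex

variable {ι : Type*} [Fintype ι]

open Classical in
/-- The carrier of a point `p` of a simplex: the vertex set of the smallest face containing `p`.
A finite partition of unity on `X` is encoded as a continuous map from `X` to a simplex, and the
carrier of the image of `x` is the set of indices which are active at `x`. -/
noncomputable def carrier (p : stdSimplex ℝ ι) : Finset ι := {i | 0 < p i}

theorem mem_carrier {p : stdSimplex ℝ ι} {i : ι} : i ∈ carrier p ↔ 0 < p i := by
  simp [carrier]

theorem notMem_carrier {p : stdSimplex ℝ ι} {i : ι} : i ∉ carrier p ↔ p i = 0 := by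
  rw [mem_carrier, not_lt, (stdSimplex.zero_le p i).ge_iff_eq']

theorem carrier_nonempty (p : stdSimplex ℝ ι) : (carrier p).Nonempty := by
  obtain ⟨i, -, hi⟩ := Finset.exists_ne_zero_of_sum_ne_zero
    (stdSimplex.sum_eq_one p ▸ one_ne_zero : ∑ i, p i ≠ 0)
  exact ⟨i, not_not.1 (mt notMem_carrier.1 hi)⟩

theorem continuous_stdSimplex_apply (i : ι) : Continuous fun p : stdSimplex ℝ ι => p i :=
  (continuous_apply i).comp continuous_subtype_val

variable {κ : Type*} [Fintype κ]

theorem stdSimplex_map_apply_of_injective {f : ι → κ} (hf : Function.Injective f)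
    (p : stdSimplex ℝ ι) (i : ι) : stdSimplex.map f p (f i) = p i := by
  classical
  rw [stdSimplex.map_coe, FunOnFinite.linearMap_apply_apply, Finset.sum_eq_single i]
  · simp only [Finset.mem_filter_univ]
    exact fun j hj hji => absurd (hf hj) hji
  · simp

theorem stdSimplex_map_apply_of_notMem_range {f : ι → κ} (p : stdSimplex ℝ ι) {j : κ}
    (hj : j ∉ range f) : stdSimplex.map f p j = 0 := by
  classical
  rw [stdSimplex.map_coe, FunOnFinite.linearMap_apply_apply, Finset.filter_false_of_mem,
    Finset.sum_empty]
  exact fun i _ hi => hj ⟨i, hi⟩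

theorem carrier_map_of_injective {f : ι → κ} (hf : Function.Injective f) (p : stdSimplex ℝ ι) :
    carrier (stdSimplex.map f p) = (carrier p).map ⟨f, hf⟩ := by
  ext j
  by_cases hj : j ∈ range f
  · obtain ⟨i, rfl⟩ := hj
    rw [mem_carrier, stdSimplex_map_apply_of_injective hf, ← mem_carrier]
    exact (Finset.mem_map' ⟨f, hf⟩).symm
  · rw [mem_carrier, stdSimplex_map_apply_of_notMem_range p hj]
    simp only [lt_irrefl, Finset.mem_map, Function.Embedding.coeFn_mk, false_iff]
    exact fun ⟨i, _, hi⟩ => hj ⟨i, hi⟩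

theorem exists_map_stdSimplex_of_ord_le [CompactSpace X] [NormalSpace X] {k : ℕ}
    {β : Set (Set X)} (hβ : IsOpenCover β) (hord : ord β ≤ k) :
    ∃ (n : ℕ) (ρ : C(X, stdSimplex ℝ (Fin n))), (∀ x, (carrier (ρ x)).card ≤ k + 1) ∧
      ∀ i, ∃ U ∈ β, ∀ x, 0 < ρ x i → x ∈ U := by
  obtain ⟨t, htβ, htfin, htcov⟩ := isCompact_univ.elim_finite_subcover_image (c := id)
    hβ.1 (by rw [← hβ.2, sUnion_eq_biUnion]; rfl)
  lift t to Finset (Set X) using htfin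
  let V : Fin t.card → Set X := fun i => t.equivFin.symm i
  have hVβ : ∀ i, V i ∈ β := fun i => htβ (t.equivFin.symm i).2
  have hVinj : Function.Injective V := Subtype.val_injective.comp t.equivFin.symm.injective
  have hVcov : univ ⊆ ⋃ i, V i := fun x hx => by
    obtain ⟨U, hU, hxU⟩ := mem_iUnion₂.1 (htcov hx)
    exact mem_iUnion.2 ⟨t.equivFin ⟨U, hU⟩, by simpa [V] using hxU⟩
  obtain ⟨f, hf⟩ := PartitionOfUnity.exists_isSubordinate isClosed_univ V
    (fun i => hβ.1 _ (hVβ i)) hVcov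
  have hfV : ∀ i x, 0 < f i x → x ∈ V i := fun i x hx => hf i (subset_tsupport _ hx.ne')
  refine ⟨t.card, ⟨fun x => ⟨fun i => f i x, fun i => f.nonneg i x, ?_⟩,
    (continuous_pi fun i => (f i).continuous).subtype_mk _⟩, fun x => ?_, fun i => ?_⟩
  · rw [← finsum_eq_sum_of_fintype, f.sum_eq_one (mem_univ x)]
  · rw [← Finset.card_map ⟨V, hVinj⟩]
    refine ord_le_iff.1 hord _ ?_ x ?_
    · simp only [Finset.coe_map, image_subset_iff]
      exact fun i _ => hVβ i
    · simp only [Finset.forall_mem_map, mem_carrier]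
      exact fun i hi => hfV i x hi
  · exact ⟨V i, hVβ i, hfV i⟩

theorem exists_fine_map_stdSimplex {K : Type*} [PseudoMetricSpace K] [CompactSpace K] {k : ℕ}
    (hk : topDim K ≤ k) {δ : ℝ} (hδ : 0 < δ) :
    ∃ (n : ℕ) (ρ : C(K, stdSimplex ℝ (Fin n))), k < n ∧ (∀ x, (carrier (ρ x)).card ≤ k + 1) ∧
      ∀ i x y, 0 < ρ x i → 0 < ρ y i → dist x y < δ := by
  obtain ⟨β, hβ, hfine, hord⟩ := topDim_le_iff.1 hk (range fun x : K => Metric.ball x (δ / 2))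
    ⟨forall_mem_range.2 fun _ => Metric.isOpen_ball, by
      simp only [sUnion_range, eq_univ_iff_forall, mem_iUnion]
      exact fun x => ⟨x, Metric.mem_ball_self (half_pos hδ)⟩⟩
  obtain ⟨n, ρ, hcard, hsupp⟩ := exists_map_stdSimplex_of_ord_le hβ hord
  have hinj : Function.Injective (Fin.castAdd (k + 1) : Fin n → _) := Fin.castAdd_injective n _
  refine ⟨n + (k + 1), .comp ⟨_, stdSimplex.continuous_map (Fin.castAdd (k + 1))⟩ ρ, by lia,
    fun x => ?_, fun i x y hx hy => ?_⟩
  · simpa [carrier_map_of_injective hinj] using hcard x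
  · simp only [ContinuousMap.comp_apply, ContinuousMap.coe_mk] at hx hy
    by_cases hi : i ∈ range (Fin.castAdd (k + 1) : Fin n → _)
    · obtain ⟨j, rfl⟩ := hi
      rw [stdSimplex_map_apply_of_injective hinj] at hx hy
      obtain ⟨U, hU, hUsupp⟩ := hsupp j
      obtain ⟨_, ⟨z, rfl⟩, hUz⟩ := hfine U hU
      exact (dist_triangle_right x y z).trans_lt <| (add_halves δ).symm ▸
        add_lt_add (hUz (hUsupp x hx)) (hUz (hUsupp y hy))
    · exact absurd hx (stdSimplex_map_apply_of_notMem_range _ hi).not_gt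

end Simplex

section Staircase

variable {n : ℕ}

/-- The sum of the first `k` barycentric coordinates of `p`. The intervals between consecutive
partial sums subdivide `[0, 1]` into pieces indexed by the carrier of `p`. -/
noncomputable def partialSum (p : stdSimplex ℝ (Fin n)) (k : ℕ) : ℝ :=
  ∑ j : Fin n with j.val < k, p j

theorem partialSum_zero (p : stdSimplex ℝ (Fin n)) : partialSum p 0 = 0 := by
  simp [partialSum]

theorem partialSum_self (p : stdSimplex ℝ (Fin n)) : partialSum p n = 1 := by
  simp [partialSum, stdSimplex.sum_eq_one]

theorem partialSum_succ (p : stdSimplex ℝ (Fin n)) (i : Fin n) :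
    partialSum p (i + 1) = partialSum p i + p i := by
  have hsplit : Finset.univ.filter (fun j : Fin n => j.val < i + 1) =
      insert i (Finset.univ.filter fun j => j.val < i.val) := by
    ext j
    simp only [Finset.mem_filter_univ, Finset.mem_insert, Fin.ext_iff]
    lia
  rw [partialSum, hsplit, Finset.sum_insert (by simp), add_comm, partialSum]

theorem partialSum_mono (p : stdSimplex ℝ (Fin n)) : Monotone (partialSum p) := fun _ _ hkl =>
  Finset.sum_le_sum_of_subset_of_nonneg
    (Finset.monotone_filter_right _ fun _ _ hj => hj.trans_le hkl)
    fun j _ _ => stdSimplex.zero_le p j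

theorem continuous_partialSum (k : ℕ) :
    Continuous fun p : stdSimplex ℝ (Fin n) => partialSum p k :=
  continuous_finsetSum _ fun j _ => continuous_stdSimplex_apply j

/-- The piece of the subdivision of `[0, 1]` associated with the vertex `i`. -/
def stair (p : stdSimplex ℝ (Fin n)) (i : Fin n) : Set ℝ :=
  Ioo (partialSum p i) (partialSum p (i + 1))

theorem pos_of_mem_stair {p : stdSimplex ℝ (Fin n)} {i : Fin n} {t : ℝ} (ht : t ∈ stair p i) :
    0 < p i := by
  have hlt := ht.1.trans ht.2
  rwa [partialSum_succ, lt_add_iff_pos_right] at hlt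

theorem exists_mem_stair {p : stdSimplex ℝ (Fin n)} {t : ℝ} (ht : t ∈ Ioo (0 : ℝ) 1)
    (hne : ∀ k : Fin n, partialSum p k ≠ t) : ∃ i, t ∈ stair p i := by
  have hex : ∃ k, t < partialSum p k := ⟨n, by rw [partialSum_self]; exact ht.2⟩
  obtain ⟨k, hk⟩ : ∃ k, Nat.find hex = k + 1 := Nat.exists_eq_succ_of_ne_zero fun h0 => by
    have := Nat.find_spec hex
    rw [h0, partialSum_zero] at this
    exact this.not_gt ht.1
  have hkn : k + 1 ≤ n := hk ▸ Nat.find_min' hex (by rw [partialSum_self]; exact ht.2)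
  have hle : partialSum p k ≤ t := not_lt.1 (Nat.find_min hex (by lia))
  exact ⟨⟨k, hkn⟩, hle.lt_of_ne (hne ⟨k, hkn⟩), hk ▸ Nat.find_spec hex⟩

open Classical in
/-- The positive left endpoints of the pieces of the subdivision of `[0, 1]` given by `p`. -/
noncomputable def breakpoints (p : stdSimplex ℝ (Fin n)) : Finset ℝ :=
  ((carrier p).image fun i : Fin n => partialSum p i).erase 0

theorem card_breakpoints_le (p : stdSimplex ℝ (Fin n)) :
    (breakpoints p).card ≤ (carrier p).card - 1 := by
  classical
  have hzero : (0 : ℝ) ∈ (carrier p).image fun i : Fin n => partialSum p i := by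
    refine Finset.mem_image.2 ⟨_, Finset.min'_mem _ (carrier_nonempty p), ?_⟩
    refine Finset.sum_eq_zero fun j hj => notMem_carrier.1 fun hmem => ?_
    exact ((Finset.min'_le _ _ hmem).trans_lt
      (Fin.lt_def.2 (Finset.mem_filter.1 hj).2)).false
  rw [breakpoints, Finset.card_erase_of_mem hzero]
  exact Nat.sub_le_sub_right Finset.card_image_le 1

theorem eq_of_mem_stair_of_breakpoints {p : stdSimplex ℝ (Fin n)} {i j : Fin n} {t u : ℝ}
    (ht : t ∈ stair p i) (hu : u ∈ stair p j) (htu : t ≤ u)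
    (hbreak : ∀ b ∈ breakpoints p, b ≤ u → b ≤ t) : i = j := by
  rcases lt_trichotomy i j with hij | hij | hij
  · have hle : partialSum p (i + 1) ≤ partialSum p j := partialSum_mono p hij
    have hpos : 0 < partialSum p j :=
      ((partialSum_zero p).ge.trans (partialSum_mono p (Nat.zero_le i))).trans_lt
        (ht.1.trans (ht.2.trans_le hle))
    have hmem : partialSum p j ∈ breakpoints p := Finset.mem_erase.2
      ⟨hpos.ne',
      Finset.mem_image_of_mem (fun i : Fin n => partialSum p i)
        (mem_carrier.2 (pos_of_mem_stair hu))⟩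
    exact absurd (hbreak _ hmem hu.1.le) (ht.2.trans_le hle).not_ge
  · exact hij
  · have hle : partialSum p (j + 1) ≤ partialSum p i := partialSum_mono p hij
    exact absurd htu ((hu.2.trans_le hle).trans ht.1).not_ge

variable {A : Type*} {n : A → ℕ} (ρ : ∀ a, C(X, stdSimplex ℝ (Fin (n a))))

/-- The points of `X` at which the pieces with labels `i a` of the subdivisions of `[0, 1]` given
by the maps `ρ a` have a common point. -/
def stairSet (i : ∀ a, Fin (n a)) : Set X := {x | ∃ t, ∀ a, t ∈ stair (ρ a x) (i a)}

theorem isOpenCover_stairSet [Finite A] : IsOpenCover (range (stairSet ρ)) := by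
  refine ⟨forall_mem_range.2 fun i => ?_, eq_univ_iff_forall.2 fun x => ?_⟩
  · rw [show stairSet ρ i = ⋃ t : ℝ, ⋂ a, {x | t ∈ stair (ρ a x) (i a)} by
      ext; simp [stairSet]]
    refine isOpen_iUnion fun t => isOpen_iInter_of_finite fun a => ?_
    have hcont : ∀ k, Continuous fun x => partialSum (ρ a x) k := fun k =>
      (continuous_partialSum k).comp (ρ a).continuous
    exact (isOpen_lt (hcont _) continuous_const).inter (isOpen_lt continuous_const (hcont _))
  · obtain ⟨t, ht, hne⟩ := (Ioo_infinite (zero_lt_one' ℝ)).exists_notMem_finite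
      (finite_range fun q : Σ a, Fin (n a) => partialSum (ρ q.1 x) q.2)
    choose i hi using fun a =>
      exists_mem_stair (p := ρ a x) ht fun k hk => hne ⟨⟨a, k⟩, hk⟩
    exact ⟨_, mem_range_self i, t, hi⟩

variable [Fintype A]

theorem ord_stairSet_le {m : ℕ} (hm : ∀ x, ∑ a, ((carrier (ρ a x)).card - 1) ≤ m) :
    ord (range (stairSet ρ)) ≤ m := by
  classical
  refine ord_le_iff.2 fun s hs x hx => ?_
  have hstair : ∀ U ∈ s, ∃ i, stairSet ρ i = U ∧ ∃ t, ∀ a, t ∈ stair (ρ a x) (i a) := by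
    intro U hU
    obtain ⟨i, rfl⟩ := hs hU
    exact ⟨i, rfl, hx _ hU⟩
  choose! i hi t ht using hstair
  -- A member of the cover containing `x` is determined by the number of breakpoints up to its `t`.
  let B : Finset ℝ := Finset.univ.biUnion fun a => breakpoints (ρ a x)
  have hB : B.card ≤ m := Finset.card_biUnion_le.trans <|
    (Finset.sum_le_sum fun a _ => card_breakpoints_le _).trans (hm x)
  have hinj : ∀ U ∈ s, ∀ V ∈ s, t U ≤ t V →
      (B.filter (· ≤ t U)).card = (B.filter (· ≤ t V)).card → U = V := by
    intro U hU V hV hle hcard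
    have heq : B.filter (· ≤ t U) = B.filter (· ≤ t V) := Finset.eq_of_subset_of_card_le
      (Finset.monotone_filter_right _ fun b _ (hb : b ≤ t U) => hb.trans hle) hcard.ge
    rw [← hi U hU, ← hi V hV]
    congr 1
    ext1 a
    refine eq_of_mem_stair_of_breakpoints (ht U hU a) (ht V hV a) hle fun b hb hbV => ?_
    have hbB : b ∈ B.filter (· ≤ t V) :=
      Finset.mem_filter.2 ⟨Finset.mem_biUnion.2 ⟨a, Finset.mem_univ a, hb⟩, hbV⟩
    exact (Finset.mem_filter.1 (heq.symm.subset hbB)).2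
  calc s.card ≤ (Finset.range (m + 1)).card :=
        Finset.card_le_card_of_injOn (fun U => (B.filter (· ≤ t U)).card)
          (fun U _ => Finset.mem_range.2 (by
            have := Finset.card_filter_le B (· ≤ t U)
            lia))
          (fun U hU V hV hUV => (le_total (t U) (t V)).elim
            (fun hle => hinj U hU V hV hle hUV) fun hle => (hinj V hV U hU hle hUV.symm).symm)
    _ = m + 1 := Finset.card_range _

theorem exists_isOpenCover_ord_le_of_carrier {m : ℕ}
    (hm : ∀ x, ∑ a, ((carrier (ρ a x)).card - 1) ≤ m) :
    ∃ β : Set (Set X), IsOpenCover β ∧ ord β ≤ m ∧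
      ∀ W ∈ β, ∃ i : ∀ a, Fin (n a), ∀ a, ∀ x ∈ W, 0 < ρ a x (i a) :=
  ⟨range (stairSet ρ), isOpenCover_stairSet ρ, ord_stairSet_le ρ hm,
    forall_mem_range.2 fun i => ⟨i, fun a _ ⟨_, ht⟩ => pos_of_mem_stair (ht a)⟩⟩

end Staircase

section MeanDimension

variable {d : X → X → ℝ}

/-- The metric space structure given by a compatible metric; its topology is the given one. -/
abbrev IsCompatMetric.toMetricSpace (hd : IsCompatMetric d) : MetricSpace X :=
  MetricSpace.ofDistTopology d hd.refl hd.symm hd.triangle hd.isOpen_iff hd.eq_of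

theorem IsCompatMetric.continuous (hd : IsCompatMetric d) :
    Continuous fun p : X × X => d p.1 p.2 :=
  letI := hd.toMetricSpace
  (continuous_dist : Continuous fun p : X × X => dist p.1 p.2)

theorem IsCompatMetric.exists_bound [CompactSpace X] (hd : IsCompatMetric d) :
    ∃ C, 0 ≤ C ∧ ∀ x y, d x y ≤ C := by
  obtain ⟨C, hC⟩ := (isCompact_range hd.continuous).bddAbove
  exact ⟨max C 0, le_max_right _ _, fun x y => (hC ⟨(x, y), rfl⟩).trans (le_max_left _ _)⟩

theorem exists_abs_sub_lt_of_dist_lt {Y ι : Type*} [PseudoMetricSpace Y] [CompactSpace Y]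
    [Finite ι] {g : ι → Y → ℝ} (hg : ∀ i, Continuous (g i)) {ε : ℝ} (hε : 0 < ε) :
    ∃ δ > 0, ∀ x y, dist x y < δ → ∀ i, |g i x - g i y| < ε := by
  have := Fintype.ofFinite ι
  obtain ⟨δ, hδ, h⟩ := Metric.uniformContinuous_iff.1
    (CompactSpace.uniformContinuous_of_continuous (continuous_pi hg)) ε hε
  exact ⟨δ, hδ, fun x y hxy i => (dist_le_pi_dist _ _ i).trans_lt (h hxy)⟩

theorem IsCompatMetric.exists_forall_dist_lt [CompactSpace X] (hd : IsCompatMetric d)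
    {K : Type*} [MetricSpace K] {π : ℤ → X → K} (hπ : ∀ j, Continuous (π j))
    (hinj : ∀ x y, (∀ j, π j x = π j y) → x = y) {ε : ℝ} (hε : 0 < ε) :
    ∃ (m : ℕ) (δ : ℝ), 0 < δ ∧
      ∀ x y, (∀ j : ℤ, |j| ≤ m → dist (π j x) (π j y) < δ) → d x y < ε := by
  let U : ℕ → Set (X × X) := fun m =>
    ⋃ (j : ℤ) (_ : |j| ≤ m), {p | 1 / ((m : ℝ) + 1) < dist (π j p.1) (π j p.2)}
  have hU_open : ∀ m, IsOpen (U m) := fun m => isOpen_biUnion fun j _ =>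
    isOpen_lt continuous_const
      (((hπ j).comp continuous_fst).dist ((hπ j).comp continuous_snd))
  have hU_mono : Monotone U := fun m m' hm p hp => by
    obtain ⟨j, hj, hlt⟩ := mem_iUnion₂.1 hp
    exact mem_iUnion₂.2 ⟨j, by lia,
      lt_of_le_of_lt (b := 1 / ((m : ℝ) + 1)) (Nat.one_div_le_one_div hm) hlt⟩
  have hcover : {p : X × X | ε ≤ d p.1 p.2} ⊆ ⋃ m, U m := fun ⟨x, y⟩ hxy => by
    obtain ⟨j, hj⟩ : ∃ j, π j x ≠ π j y := by
      by_contra! hall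
      rw [mem_ofPred_eq, hinj x y hall, hd.refl] at hxy
      exact hxy.not_gt hε
    obtain ⟨m, hm⟩ := exists_nat_one_div_lt (dist_pos.2 hj)
    exact mem_iUnion.2 ⟨max m j.natAbs, mem_iUnion₂.2 ⟨j, by rw [Int.abs_eq_natAbs]; lia,
      (Nat.one_div_le_one_div (le_max_left _ _)).trans_lt hm⟩⟩
  obtain ⟨m, hm⟩ := (isClosed_le continuous_const hd.continuous).isCompact.elim_directed_cover U
    hU_open hcover (directed_of_isDirected_le hU_mono)
  refine ⟨m, 1 / (m + 1), by positivity, fun x y hxy => not_le.1 fun hle => ?_⟩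
  obtain ⟨j, hj, hlt⟩ := mem_iUnion₂.1 (hm (a := (x, y)) hle)
  exact hlt.not_gt (hxy j hj)

theorem le_dynDist {Y : Type*} {d : Y → Y → ℝ} {C : ℝ} (hC : ∀ x y, d x y ≤ C) (T : Y → Y)
    {n i : ℕ} (hi : i < n) (x y : Y) : d (T^[i] x) (T^[i] y) ≤ dynDist d T n x y :=
  le_csSup ⟨C, by rintro _ ⟨i, _, rfl⟩; exact hC _ _⟩ ⟨i, hi, rfl⟩

theorem dynDist_le {Y : Type*} {d : Y → Y → ℝ} {T : Y → Y} {n : ℕ} {x y : Y} {C : ℝ}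
    (hC : 0 ≤ C) (h : ∀ i < n, d (T^[i] x) (T^[i] y) ≤ C) : dynDist d T n x y ≤ C :=
  Real.sSup_le (by rintro _ ⟨i, hi, rfl⟩; exact h i hi) hC

theorem lt_of_mesh_lt {Y : Type*} {d : Y → Y → ℝ} {C : ℝ} (hC : 0 ≤ C) (hdC : ∀ x y, d x y ≤ C)
    {α : Set (Set Y)} {ε : ℝ} (hα : mesh d α < ε) {U : Set Y} (hU : U ∈ α) {x y : Y}
    (hx : x ∈ U) (hy : y ∈ U) : d x y < ε := by
  have hbdd : ∀ V : Set Y, BddAbove {r | ∃ x ∈ V, ∃ y ∈ V, r = d x y} := fun V =>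
    ⟨C, by rintro _ ⟨x, _, y, _, rfl⟩; exact hdC x y⟩
  calc d x y ≤ diamD d U := le_csSup (hbdd U) ⟨x, hx, y, hy, rfl⟩
    _ ≤ mesh d α := le_csSup ⟨C, forall_mem_image.2 fun V _ => Real.sSup_le
        (by rintro _ ⟨x, _, y, _, rfl⟩; exact hdC x y) hC⟩ (mem_image_of_mem _ hU)
    _ < ε := hα

theorem mesh_le {Y : Type*} {d : Y → Y → ℝ} {C : ℝ} (hC : 0 ≤ C) {α : Set (Set Y)}
    (h : ∀ U ∈ α, ∀ x ∈ U, ∀ y ∈ U, d x y ≤ C) : mesh d α ≤ C :=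
  Real.sSup_le (forall_mem_image.2 fun U hU => Real.sSup_le
    (by rintro _ ⟨x, hx, y, hy, rfl⟩; exact h U hU x hx y hy) hC) hC

theorem widim_le {ε C : ℝ} (hC : 0 ≤ C) (hCε : C < ε) {β : Set (Set X)} (hβ : IsOpenCover β)
    (h : ∀ U ∈ β, ∀ x ∈ U, ∀ y ∈ U, d x y ≤ C) : widim ε d ≤ ord β :=
  (iInf₂_le (f := fun α (_ : α ∈ {α : Set (Set X) | IsOpenCover α ∧ mesh d α < ε}) => covD α) β
    ⟨hβ, (mesh_le hC h).trans_lt hCε⟩).trans <|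
  iInf₂_le (f := fun γ (_ : γ ∈ {γ : Set (Set X) | IsOpenCover γ ∧ Refines γ β}) => ord γ) β
    ⟨hβ, fun V hV => ⟨V, hV, subset_rfl⟩⟩

theorem le_widim {ε C : ℝ} (hC : 0 ≤ C) (hdC : ∀ x y, d x y ≤ C) {m : ℕ∞}
    (h : ∀ β : Set (Set X), IsOpenCover β → (∀ V ∈ β, ∀ x ∈ V, ∀ y ∈ V, d x y < ε) → m ≤ ord β) :
    m ≤ widim ε d :=
  le_iInf₂ fun _ hα => le_iInf₂ fun β hβ => h β hβ.1 fun V hV x hx y hy => by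
    obtain ⟨U, hU, hVU⟩ := hβ.2 V hV
    exact lt_of_mesh_lt hC hdC hα.2 hU (hVU hx) (hVU hy)

theorem mdim_le_of_widim_le {T : X → X} {k : ℕ}
    (h : ∀ ε > 0, ∃ C : ℕ, ∀ N, widim ε (dynDist d T N) ≤ ((N + C) * k : ℕ)) : mdim T d ≤ k := by
  refine iSup₂_le fun ε hε => ?_
  obtain ⟨C, hC⟩ := h ε hε
  have hlim : Tendsto (fun N : ℕ => (k : ℝ≥0∞) + (C * k : ℕ) * (N : ℝ≥0∞)⁻¹) atTop (nhds k) := by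
    simpa using tendsto_const_nhds.add (ENNReal.Tendsto.const_mul
      ENNReal.tendsto_inv_nat_nhds_zero (Or.inr (ENNReal.natCast_ne_top (C * k))))
  rw [← hlim.liminf_eq]
  refine liminf_le_liminf ?_
  filter_upwards [eventually_ne_atTop 0] with N hN
  have hw : (widim ε (dynDist d T N) : ℝ≥0∞) ≤ ((N + C) * k : ℕ) := by
    simpa using ENat.toENNReal_le.2 (hC N)
  calc (widim ε (dynDist d T N) : ℝ≥0∞) / N
      ≤ ((N + C) * k : ℕ) * (N : ℝ≥0∞)⁻¹ := by rw [div_eq_mul_inv]; gcongr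
    _ = k * ((N : ℝ≥0∞) * (N : ℝ≥0∞)⁻¹) + (C * k : ℕ) * (N : ℝ≥0∞)⁻¹ := by push_cast; ring
    _ = k + (C * k : ℕ) * (N : ℝ≥0∞)⁻¹ := by
      rw [ENNReal.mul_inv_cancel (by simpa using hN) (ENNReal.natCast_ne_top N), mul_one]

theorem le_mdim_of_le_widim {T : X → X} {k : ℕ} {ε : ℝ} (hε : 0 < ε)
    (h : ∀ N, (((N + 1) * k : ℕ) : ℕ∞) ≤ widim ε (dynDist d T (N + 1))) : k ≤ mdim T d := by
  refine le_trans ?_ (le_iSup₂ (f := fun (ε : ℝ) (_ : 0 < ε) =>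
    liminf (fun n : ℕ => (widim ε (dynDist d T n) : ℝ≥0∞) / (n : ℝ≥0∞)) atTop) ε hε)
  refine le_liminf_of_le (by isBoundedDefault) ?_
  filter_upwards [eventually_ne_atTop 0] with n hn
  obtain ⟨N, rfl⟩ := Nat.exists_eq_succ_of_ne_zero hn
  rw [ENNReal.le_div_iff_mul_le (.inl (by simp)) (.inl (ENNReal.natCast_ne_top _)), mul_comm]
  simpa using ENat.toENNReal_le.2 (h N)

theorem mdim_le_of_topDim_le [CompactSpace X] (hd : IsCompatMetric d) {T : X → X}
    {K : Type*} [MetricSpace K] [CompactSpace K] {k : ℕ} (hk : topDim K ≤ k) {π : ℤ → X → K}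
    (hπ : ∀ j, Continuous (π j)) (hinj : ∀ x y, (∀ j, π j x = π j y) → x = y)
    (hT : ∀ j x, π j (T x) = π (j + 1) x) : mdim T d ≤ k := by
  refine mdim_le_of_widim_le fun ε hε => ?_
  have hTi : ∀ (i : ℕ) j x, π j (T^[i] x) = π (j + i) x := by
    intro i
    induction i with
    | zero => simp
    | succ i ih =>
      intro j x
      rw [Function.iterate_succ_apply, ih, hT, add_assoc, ← Nat.cast_succ]
  obtain ⟨m, δ, hδ, hm⟩ := hd.exists_forall_dist_lt hπ hinj (half_pos hε)
  obtain ⟨n, ρ, -, hcard, hfine⟩ := exists_fine_map_stdSimplex hk hδ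
  refine ⟨2 * m + 1, fun N => ?_⟩
  obtain ⟨β, hβ, hord, hW⟩ := exists_isOpenCover_ord_le_of_carrier
    (fun a : Fin (N + (2 * m + 1)) => ρ.comp ⟨π (a.val - m : ℤ), hπ _⟩)
    (m := (N + (2 * m + 1)) * k) fun x =>
      (Finset.sum_le_card_nsmul _ _ k fun a _ => Nat.sub_le_of_le_add (hcard _)).trans (by simp)
  refine (widim_le (half_pos hε).le (half_lt_self hε) hβ fun W hWβ x hx y hy => ?_).trans hord
  obtain ⟨i, hi⟩ := hW W hWβ
  refine dynDist_le (half_pos hε).le fun q hq => (hm _ _ fun j hj => ?_).le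
  obtain ⟨a, ha⟩ : ∃ a : Fin (N + (2 * m + 1)), (a.val : ℤ) - m = j + q :=
    ⟨⟨(j + q + m).toNat, by grind⟩, by grind⟩
  rw [hTi, hTi, ← ha]
  exact hfine _ _ _ (hi a x hx) (hi a y hy)

end MeanDimension

section Cochain

variable {Y F : Type*} [Field F]

/-- The alternating coboundary of an `F`-valued cochain `c`, evaluated at a list of points; lists
play the role of ordered simplices, and the coboundary is linear in the cochain. -/
def coboundary : List Y → (List Y → F) →ₗ[F] F
  | [] => 0
  | x :: l => LinearMap.proj l - coboundary l ∘ₗ LinearMap.funLeft F F (x :: ·)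

@[simp]
theorem coboundary_nil (c : List Y → F) : coboundary [] c = 0 := rfl

theorem coboundary_cons (x : Y) (l : List Y) (c : List Y → F) :
    coboundary (x :: l) c = c l - coboundary l (fun l => c (x :: l)) := rfl

/-- The cochain `a ⌣ c` for a `0`-cochain `a`. -/
def headMul (a : Y → F) (c : List Y → F) : List Y → F
  | [] => 0
  | x :: l => a x * c (x :: l)

/-- The cochain `da ⌣ c` for a `0`-cochain `a`. -/
def diffCup (a : Y → F) (c : List Y → F) : List Y → F
  | x :: y :: l => (a y - a x) * c (y :: l)
  | _ => 0

/-- The cup product `da₁ ⌣ ⋯ ⌣ daₘ` of the differentials of a list of `0`-cochains. -/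
def diffCupProd : List (Y → F) → List Y → F
  | [] => fun l => if l.length = 1 then 1 else 0
  | a :: as => diffCup a (diffCupProd as)

theorem coboundary_headMul (a : Y → F) (c : List Y → F) (x y : Y) (l : List Y) :
    coboundary (x :: y :: l) (headMul a c) =
      diffCup a c (x :: y :: l) + a x * coboundary (x :: y :: l) c := by
  have h : (fun l => headMul a c (x :: l)) = a x • fun l => c (x :: l) := rfl
  rw [coboundary_cons, coboundary_cons x _ c, h, map_smul, smul_eq_mul, headMul, diffCup]
  ring

theorem coboundary_diffCup (a : Y → F) (c : List Y → F) (x y z : Y) (l : List Y) :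
    coboundary (x :: y :: z :: l) (diffCup a c) = -((a y - a x) * coboundary (y :: z :: l) c) := by
  have h : (fun l => diffCup a c (x :: l)) = headMul (fun t => a t - a x) c := by
    funext l
    cases l <;> rfl
  rw [coboundary_cons, h, coboundary_headMul, diffCup, diffCup]
  ring

theorem coboundary_diffCupProd (as : List (Y → F)) (l : List Y) (hl : l.length = as.length + 2) :
    coboundary l (diffCupProd as) = 0 := by
  induction as generalizing l with
  | nil =>
    obtain ⟨x, y, rfl⟩ := List.length_eq_two.1 hl
    simp [coboundary_cons, diffCupProd]
  | cons a as ih =>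
    match l, hl with
    | x :: y :: z :: l, hl =>
      rw [diffCupProd, coboundary_diffCup, ih (y :: z :: l) (by simpa using hl), mul_zero, neg_zero]

theorem diffCupProd_eq_zero {as : List (Y → F)} {a : Y → F} (ha : a ∈ as) {l : List Y}
    (h : ∀ x ∈ l, ∀ y ∈ l, a x = a y) : diffCupProd as l = 0 := by
  induction as generalizing l with
  | nil => simp at ha
  | cons b as ih =>
    match l with
    | [] => rfl
    | [_] => rfl
    | x :: y :: l =>
      rw [diffCupProd, diffCup]
      rcases List.mem_cons.1 ha with rfl | ha
      · rw [h x (by simp) y (by simp), sub_self, zero_mul]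
      · rw [ih ha fun s hs t ht => h s (.tail _ hs) t (.tail _ ht), mul_zero]

variable [PseudoMetricSpace Y]

/-- The points of `l` are pairwise at distance less than `η`: `l` is a simplex at scale `η`. -/
def IsSmall (η : ℝ) (l : List Y) : Prop := ∀ x ∈ l, ∀ y ∈ l, dist x y < η

theorem IsSmall.of_subset {η : ℝ} {l l' : List Y} (h : IsSmall η l) (hl : l' ⊆ l) : IsSmall η l' :=
  fun x hx y hy => h x (hl hx) y (hl hy)

/-- The cochains which, at scale `η` and in degree `m`, are coboundaries of cochains vanishing on
the simplices contained in one of the sets in `Es`. -/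
def relCoboundaries (F : Type*) [Field F] (Es : List (Set Y)) (m : ℕ) (η : ℝ) :
    Submodule F (List Y → F) where
  carrier := {w | ∃ c : List Y → F,
    (∀ l, IsSmall η l → l.length = m → (∃ E ∈ Es, ∀ x ∈ l, x ∈ E) → c l = 0) ∧
      ∀ l, IsSmall η l → l.length = m + 1 → w l = coboundary l c}
  zero_mem' := ⟨0, fun _ _ _ _ => rfl, fun l _ _ => by rw [map_zero, Pi.zero_apply]⟩
  add_mem' := by
    rintro w w' ⟨c, hc, hw⟩ ⟨c', hc', hw'⟩
    refine ⟨c + c', fun l hl hm hE => ?_, fun l hl hm => ?_⟩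
    · rw [Pi.add_apply, hc l hl hm hE, hc' l hl hm hE, add_zero]
    · rw [map_add, Pi.add_apply, hw l hl hm, hw' l hl hm]
  smul_mem' := by
    rintro k w ⟨c, hc, hw⟩
    refine ⟨k • c, fun l hl hm hE => ?_, fun l hl hm => ?_⟩
    · rw [Pi.smul_apply, hc l hl hm hE, smul_zero]
    · rw [map_smul, Pi.smul_apply, hw l hl hm]

variable {Es : List (Set Y)} {m : ℕ} {η : ℝ} {w w' : List Y → F}

theorem mem_relCoboundaries_congr (h : ∀ l, IsSmall η l → l.length = m + 1 → w l = w' l) :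
    w ∈ relCoboundaries F Es m η ↔ w' ∈ relCoboundaries F Es m η := by
  refine exists_congr fun c => and_congr_right fun _ => forall₃_congr fun l hl hm => ?_
  rw [h l hl hm]

section Replace

variable {ι : Type*} {a b : ι → Y → F} {E : ι → Set Y}

theorem diffCup_sub_mem_relCoboundaries {i : ι} {is : List ι} (hab : ∀ x ∈ E i, a i x = b i x)
    (hloc : ∀ i ∈ is, ∀ x ∈ E i, ∀ y ∈ E i, dist x y < η → a i x = a i y) :
    diffCup (a i - b i) (diffCupProd (is.map a)) ∈
      relCoboundaries F ((i :: is).map E) (is.length + 1) η := by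
  refine ⟨headMul (a i - b i) (diffCupProd (is.map a)), ?_, ?_⟩
  · rintro (_ | ⟨x, l⟩) hl - ⟨E', hE', hlE⟩
    · rfl
    obtain ⟨j, hj, rfl⟩ := List.mem_map.1 hE'
    rw [headMul, Pi.sub_apply]
    rcases List.mem_cons.1 hj with rfl | hj
    · rw [hab x (hlE x (by simp)), sub_self, zero_mul]
    · rw [diffCupProd_eq_zero (List.mem_map_of_mem hj) fun s hs t ht =>
        hloc j hj s (hlE s hs) t (hlE t ht) (hl s hs t ht), mul_zero]
  · intro l _ hm
    match l, hm with
    | x :: y :: l, hm =>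
      rw [coboundary_headMul, coboundary_diffCupProd _ _ (by simpa using hm), mul_zero, add_zero]

theorem diffCup_mem_relCoboundaries {w : List Y → F} {i : ι} {is : List ι}
    (hloc : ∀ x ∈ E i, ∀ y ∈ E i, dist x y < η → b i x = b i y) (his : is ≠ [])
    (hw : w ∈ relCoboundaries F (is.map E) is.length η) :
    diffCup (b i) w ∈ relCoboundaries F ((i :: is).map E) (is.length + 1) η := by
  obtain ⟨c, hc, hwc⟩ := hw
  refine ⟨-diffCup (b i) c, ?_, ?_⟩
  · rintro l hl hlm ⟨E', hE', hlE⟩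
    match l, hlm with
    | [x], _ => simp [diffCup]
    | x :: y :: l, hlm =>
      rw [Pi.neg_apply, neg_eq_zero, diffCup]
      rcases List.mem_cons.1 hE' with rfl | hE'
      · rw [hloc x (hlE x (by simp)) y (hlE y (by simp)) (hl x (by simp) y (by simp)), sub_self,
          zero_mul]
      · rw [hc (y :: l) (hl.of_subset (by simp)) (by simpa using hlm)
          ⟨E', hE', fun t ht => hlE t (.tail _ ht)⟩, mul_zero]
  · intro l hl hm
    match l, hm with
    | [x, y], hm => exact absurd (List.length_eq_zero_iff.1 (by simpa using hm)) his
    | x :: y :: z :: l, hm =>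
      rw [map_neg, coboundary_diffCup, neg_neg, diffCup,
        hwc (y :: z :: l) (hl.of_subset (by simp)) (by simpa using hm)]

theorem diffCupProd_sub_mem_relCoboundaries (is : List ι) (hab : ∀ i ∈ is, ∀ x ∈ E i, a i x = b i x)
    (hloc : ∀ i ∈ is, ∀ x ∈ E i, ∀ y ∈ E i, dist x y < η → a i x = a i y) :
    diffCupProd (is.map a) - diffCupProd (is.map b) ∈
      relCoboundaries F (is.map E) is.length η := by
  induction is with
  | nil => simp
  | cons i is ih =>
    simp only [List.forall_mem_cons] at hab hloc
    have htail : diffCup (b i) (diffCupProd (is.map a) - diffCupProd (is.map b)) ∈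
        relCoboundaries F ((i :: is).map E) (is.length + 1) η := by
      rcases eq_or_ne is [] with rfl | his
      · have h0 : diffCup (b i) (0 : List Y → F) = 0 := by
          funext l
          match l with
          | [] | [_] | _ :: _ :: _ => simp [diffCup]
        simp [h0]
      · exact diffCup_mem_relCoboundaries (fun x hx y hy hxy => by
          rw [← hab.1 x hx, ← hab.1 y hy, hloc.1 x hx y hy hxy]) his (ih hab.2 hloc.2)
    refine (mem_relCoboundaries_congr fun l _ hm => ?_).1
      (add_mem (diffCup_sub_mem_relCoboundaries hab.1 hloc.2) htail)
    match l, hm with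
    | x :: y :: l, _ =>
      simp only [Pi.add_apply, Pi.sub_apply, diffCup, diffCupProd, List.map_cons]
      ring

end Replace

open Classical in
/-- The `0`-cochain of the sublevel set `{g ≤ 0}`. -/
noncomputable def sublevelIndicator (F : Type*) [Field F] (g : Y → ℝ) : Y → F :=
  fun x => if g x ≤ 0 then 1 else 0

/-- The set of points where `g` is far from `0`. -/
def farSet (g : Y → ℝ) : Set Y := {x | 1 / 2 ≤ |g x|}

/-- The functions `gs` are essential over `F`: at no scale is the cup product of the classes
`d[g ≤ 0]` a coboundary relative to the sets where some `g` is far from `0`. This is a cohomological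
obstruction to deforming `gs`, rel these sets, to a family without common zero. -/
def IsEssential (F : Type*) [Field F] (gs : List (Y → ℝ)) : Prop :=
  ∀ η > 0, diffCupProd (gs.map (sublevelIndicator F)) ∉
    relCoboundaries F (gs.map farSet) gs.length η

end Cochain

section LebesgueCovering

variable {Y ι F : Type*} [Fintype ι] [Field F]

theorem exists_le_stdSimplex_apply (p : stdSimplex ℝ ι) {r : ℝ} (hr : r * Fintype.card ι ≤ 1) :
    ∃ i, r ≤ p i := by
  by_contra! h
  have : Nonempty ι := let ⟨i, _⟩ := carrier_nonempty p; ⟨i⟩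
  have := Finset.sum_lt_sum_of_nonempty Finset.univ_nonempty fun i _ => h i
  rw [stdSimplex.sum_eq_one, Finset.sum_const, nsmul_eq_mul, Finset.card_univ, mul_comm] at this
  exact this.not_ge hr

theorem lt_card_carrier {p : stdSimplex ℝ ι} {m : ℕ} {s : ℝ} (hs : 0 < s)
    (hsm : s * (m + 1) * Fintype.card ι ≤ 1) {J : Fin m → ι}
    (hJ : ∀ i, |p (J i) - s * (i.val + 1)| < s / 2) : m < (carrier p).card := by
  classical
  have hJinj : Function.Injective J := fun i i' hii => by
    have h := abs_lt.1 (hJ i)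
    have h' := abs_lt.1 (hJ i')
    rw [← hii] at h'
    have hlt : (i.val : ℝ) < i'.val + 1 := by by_contra! hle; nlinarith
    have hlt' : (i'.val : ℝ) < i.val + 1 := by by_contra! hle; nlinarith
    norm_cast at hlt hlt'
    lia
  obtain ⟨j₀, hj₀⟩ := exists_le_stdSimplex_apply p hsm
  have hj₀J : j₀ ∉ Finset.univ.image J := fun h => by
    obtain ⟨i, -, rfl⟩ := Finset.mem_image.1 h
    have him : (i.val : ℝ) + 1 ≤ m := by exact_mod_cast i.isLt
    nlinarith [abs_lt.1 (hJ i)]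
  have hsub : insert j₀ (Finset.univ.image J) ⊆ carrier p := by
    refine Finset.insert_subset (mem_carrier.2 (by nlinarith)) (Finset.image_subset_iff.2 ?_)
    intro i _
    exact mem_carrier.2 (by nlinarith [abs_lt.1 (hJ i), Nat.cast_nonneg (α := ℝ) i.val])
  simpa [Finset.card_insert_of_notMem hj₀J, Finset.card_image_of_injective _ hJinj]
    using Finset.card_le_card hsub

open Classical in
/-- The `0`-cochain of the set of points of the simplex with a coordinate in `A` exceeding `t`. -/
noncomputable def superlevelIndicator (F : Type*) [Field F] (A : Set ι) (t : ℝ) :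
    stdSimplex ℝ ι → F :=
  fun p => if ∃ j ∈ A, t < p j then 1 else 0

theorem exists_abs_sub_lt_of_superlevelIndicator_ne {A : Set ι} {t ε : ℝ} {p q r : stdSimplex ℝ ι}
    (hp : ∀ j, |r j - p j| < ε) (hq : ∀ j, |r j - q j| < ε)
    (h : superlevelIndicator F A t p ≠ superlevelIndicator F A t q) : ∃ j, |r j - t| < ε := by
  wlog hpA : ∃ j ∈ A, t < p j generalizing p q
  · refine this hq hp h.symm (by_contra fun hqA => h ?_)
    rw [superlevelIndicator, superlevelIndicator, if_neg hpA, if_neg hqA]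
  have hqA : ¬∃ j ∈ A, t < q j := fun hqA => h <| by
    rw [superlevelIndicator, superlevelIndicator, if_pos hpA, if_pos hqA]
  obtain ⟨j, hj, hjp⟩ := hpA
  have hjq : q j ≤ t := not_lt.1 fun hjq => hqA ⟨j, hj, hjq⟩
  refine ⟨j, abs_lt.2 ?_⟩
  constructor <;> linarith [abs_lt.1 (hp j), abs_lt.1 (hq j)]

theorem diffCupProd_superlevelIndicator_eq_zero {m : ℕ} {s : ℝ} (hs : 0 < s)
    (hsm : s * (m + 1) * Fintype.card ι ≤ 1) {ρ : Y → stdSimplex ℝ ι} (A : Fin m → Set ι)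
    {z : Y} {l : List Y} (hl : ∀ x ∈ l, ∀ j, |ρ z j - ρ x j| < s / 2)
    (hz : (carrier (ρ z)).card ≤ m) :
    diffCupProd ((List.finRange m).map
      fun i => superlevelIndicator F (A i) (s * (i.val + 1)) ∘ ρ) l = 0 := by
  by_contra hne
  have hJ : ∀ i : Fin m, ∃ j, |ρ z j - s * (i.val + 1)| < s / 2 := fun i => by
    by_contra! hi
    refine hne (diffCupProd_eq_zero (List.mem_map_of_mem (List.mem_finRange i)) fun x hx y hy => ?_)
    by_contra hxy
    obtain ⟨j, hj⟩ := exists_abs_sub_lt_of_superlevelIndicator_ne (hl x hx) (hl y hy) hxy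
    exact (hi j).not_gt hj
  choose J hJ using hJ
  exact (lt_card_carrier hs hsm hJ).not_ge hz

theorem sublevelIndicator_eq_of_mem_farSet {g : Y → ℝ} {x y : Y} (hx : x ∈ farSet g)
    (hy : y ∈ farSet g) (hxy : |g x - g y| < 1) :
    sublevelIndicator F g x = sublevelIndicator F g y := by
  have hxy := abs_lt.1 hxy
  unfold sublevelIndicator
  rcases le_abs.1 (show _ ≤ |g x| from hx) with hx | hx <;>
    rcases le_abs.1 (show _ ≤ |g y| from hy) with hy | hy
  · rw [if_neg (by linarith), if_neg (by linarith)]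
  · linarith
  · linarith
  · rw [if_pos (by linarith), if_pos (by linarith)]

theorem sublevelIndicator_eq_superlevelIndicator {g : Y → ℝ} {ρ : Y → stdSimplex ℝ ι}
    (hsep : ∀ j x y, 0 < ρ x j → 0 < ρ y j → g x ≤ -1 / 2 → g y < 1 / 2) {t r : ℝ} (ht : 0 < t)
    (htr : t < r) (hr : r * Fintype.card ι ≤ 1) {x : Y} (hx : x ∈ farSet g) :
    sublevelIndicator F g x =
      superlevelIndicator F {j | ∃ y, 0 < ρ y j ∧ g y ≤ -1 / 2} t (ρ x) := by
  unfold sublevelIndicator superlevelIndicator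
  rcases le_abs.1 (show _ ≤ |g x| from hx) with hx | hx
  · rw [if_neg (by linarith), if_neg]
    rintro ⟨j, ⟨y, hy, hgy⟩, hj⟩
    exact (hsep j y x hy (ht.trans hj) hgy).not_ge hx
  · obtain ⟨j, hj⟩ := exists_le_stdSimplex_apply (ρ x) hr
    rw [if_pos (by linarith), if_pos]
    exact ⟨j, ⟨x, by linarith, by linarith⟩, by linarith⟩

theorem map_finRange_get {α β : Type*} (φ : α → β) (l : List α) :
    (List.finRange l.length).map (fun i => φ (l.get i)) = l.map φ := by
  rw [← List.ofFn_eq_map, ← Function.comp_def φ, ← List.map_ofFn, List.ofFn_get]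

/- Cutting `ρ` at distinct small levels replaces the cochains `[g ≤ 0]` by cochains whose cup
product vanishes: on a simplex where it does not, `gs.length` coordinates of `ρ` are close to these
levels and one more is large. -/
theorem not_isEssential_of_card_carrier_le [PseudoMetricSpace Y] [CompactSpace Y]
    {gs : List (Y → ℝ)} (hc : ∀ g ∈ gs, Continuous g) {ρ : Y → stdSimplex ℝ ι}
    (hρc : Continuous ρ) (hcard : ∀ x, (carrier (ρ x)).card ≤ gs.length)
    (hsep : ∀ g ∈ gs, ∀ j x y, 0 < ρ x j → 0 < ρ y j → g x ≤ -1 / 2 → g y < 1 / 2) :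
    ¬IsEssential F gs := by
  intro hE
  obtain ⟨s, hs, hsm⟩ : ∃ s : ℝ, 0 < s ∧ s * (gs.length + 1) * Fintype.card ι ≤ 1 := by
    refine ⟨1 / ((Fintype.card ι + 1) * (gs.length + 1)), by positivity, ?_⟩
    field_simp
    linarith
  obtain ⟨η₁, hη₁, hg⟩ := exists_abs_sub_lt_of_dist_lt
    (fun i : Fin gs.length => hc _ (gs.get_mem i)) one_pos
  obtain ⟨η₂, hη₂, hρ⟩ := exists_abs_sub_lt_of_dist_lt (g := fun j x => ρ x j)
    (fun j => (continuous_stdSimplex_apply j).comp hρc) (half_pos hs)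
  let A : Fin gs.length → Set ι := fun i => {j | ∃ y, 0 < ρ y j ∧ gs.get i y ≤ -1 / 2}
  have hreplace := diffCupProd_sub_mem_relCoboundaries (η := min η₁ η₂)
    (a := fun i => sublevelIndicator F (gs.get i)) (E := fun i => farSet (gs.get i))
    (b := fun i => superlevelIndicator F (A i) (s * (i.val + 1)) ∘ ρ) (List.finRange gs.length)
    (fun i _ x hx => sublevelIndicator_eq_superlevelIndicator (hsep _ (gs.get_mem i))
      (by positivity) (by gcongr; exact_mod_cast i.isLt) hsm hx)
    (fun i _ x hx y hy hxy =>
      sublevelIndicator_eq_of_mem_farSet hx hy (hg x y (hxy.trans_le (min_le_left _ _)) i))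
  rw [map_finRange_get (sublevelIndicator F), map_finRange_get farSet, List.length_finRange]
    at hreplace
  refine hE _ (lt_min hη₁ hη₂) ((mem_relCoboundaries_congr fun l hl hlen => ?_).1 hreplace)
  obtain ⟨z, l, rfl⟩ := List.exists_cons_of_length_eq_add_one hlen
  rw [Pi.sub_apply, diffCupProd_superlevelIndicator_eq_zero hs hsm A (z := z)
    (fun x hx => hρ z x ((hl z (by simp) x hx).trans_le (min_le_right _ _))) (hcard z), sub_zero]

theorem IsEssential.length_le_ord [PseudoMetricSpace Y] [CompactSpace Y] {gs : List (Y → ℝ)}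
    (hE : IsEssential F gs) (hc : ∀ g ∈ gs, Continuous g) {β : Set (Set Y)} (hβ : IsOpenCover β)
    (hsep : ∀ V ∈ β, ∀ g ∈ gs, ∀ x ∈ V, ∀ y ∈ V, g x ≤ -1 / 2 → g y < 1 / 2) :
    gs.length ≤ ord β := by
  by_contra! hlt
  obtain ⟨k, hk⟩ : ∃ k, gs.length = k + 1 :=
    Nat.exists_eq_succ_of_ne_zero fun h => by simp [h] at hlt
  have hord : ord β ≤ k := by
    rw [hk, Nat.cast_succ] at hlt
    exact Order.le_of_lt_add_one hlt
  obtain ⟨n, ρ, hcard, hρβ⟩ := exists_map_stdSimplex_of_ord_le hβ hord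
  refine not_isEssential_of_card_carrier_le hc ρ.continuous
    (fun x => (hcard x).trans hk.ge) (fun g hg j x y hx hy => ?_) hE
  obtain ⟨U, hU, hUρ⟩ := hρβ j
  exact hsep U hU g hg x (hUρ x hx) y (hUρ y hy)

end LebesgueCovering

section Kunneth

variable {Y Z F : Type*} [Field F]

/-- The Eilenberg–Zilber shuffle evaluation: the signed sum of the values of a cochain on the
staircase paths of the grid `ys × zs`. With the value at `[]` of the cochain as value at the
degenerate grid `[] × [z]`, it satisfies `shuffle_coboundary` in all degrees. -/
def shuffle : List Y → List Z → (List (Y × Z) → F) →ₗ[F] F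
  | [], zs => if zs.length = 1 then LinearMap.proj [] else 0
  | _ :: _, [] => 0
  | y :: ys, z :: zs =>
    shuffle ys (z :: zs) ∘ₗ LinearMap.funLeft F F ((y, z) :: ·) +
      (-1 : F) ^ ys.length • shuffle (y :: ys) zs ∘ₗ LinearMap.funLeft F F ((y, z) :: ·)
  termination_by ys zs => ys.length + zs.length

theorem shuffle_nil_left (zs : List Z) (c : List (Y × Z) → F) :
    shuffle [] zs c = if zs.length = 1 then c [] else 0 := by
  rw [shuffle]
  split_ifs <;> rfl

theorem shuffle_nil_right (ys : List Y) (c : List (Y × Z) → F) : shuffle ys [] c = 0 := by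
  cases ys <;> simp [shuffle]

theorem shuffle_cons_cons (y : Y) (ys : List Y) (z : Z) (zs : List Z) (c : List (Y × Z) → F) :
    shuffle (y :: ys) (z :: zs) c = shuffle ys (z :: zs) (fun l => c ((y, z) :: l)) +
      (-1) ^ ys.length * shuffle (y :: ys) zs (fun l => c ((y, z) :: l)) := by
  rw [shuffle]
  rfl

theorem shuffle_eq_zero {ys : List Y} {zs : List Z} {c : List (Y × Z) → F}
    (hc : ∀ l, l.length + 1 = ys.length + zs.length → (∀ p ∈ l, p.1 ∈ ys ∧ p.2 ∈ zs) → c l = 0) :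
    shuffle ys zs c = 0 := by
  match ys, zs with
  | [], zs =>
    rw [shuffle_nil_left]
    split_ifs with h
    · exact hc [] (by simp [h]) (by simp)
    · rfl
  | ys, [] => exact shuffle_nil_right ys c
  | y :: ys, z :: zs =>
    have hcons : ∀ l, l.length + 2 = (y :: ys).length + (z :: zs).length →
        (∀ p ∈ l, p.1 ∈ y :: ys ∧ p.2 ∈ z :: zs) → c ((y, z) :: l) = 0 := fun l hl h =>
      hc _ (by simpa using hl) (List.forall_mem_cons.2 ⟨by simp, h⟩)
    rw [shuffle_cons_cons, shuffle_eq_zero fun l hl h => hcons l (by simp at hl ⊢; lia)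
        fun p hp => ⟨.tail _ (h p hp).1, (h p hp).2⟩,
      shuffle_eq_zero fun l hl h => hcons l (by simp at hl ⊢; lia)
        fun p hp => ⟨(h p hp).1, .tail _ (h p hp).2⟩, mul_zero, add_zero]
  termination_by ys.length + zs.length

theorem coboundary_unit (k : F) (l : List Z) :
    coboundary l (fun l => if l.length = 1 then k else 0) = 0 := by
  match l with
  | [] | [_] => simp [coboundary_cons]
  | [_, _] => simp [coboundary_cons]
  | _ :: _ :: _ :: _ => simp [coboundary_cons, ← Pi.zero_def]

theorem coboundary_sign (c : List Y → F) (l : List Y) :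
    coboundary l (fun l => (-1) ^ l.length * c l) = (-1) ^ (l.length + 1) * coboundary l c := by
  induction l generalizing c with
  | nil => simp
  | cons x l ih =>
    have h : (fun l => (-1 : F) ^ (x :: l).length * c (x :: l)) =
        -fun l => (-1) ^ l.length * c (x :: l) := by
      funext l
      simp [pow_succ]
    rw [coboundary_cons, coboundary_cons, h, map_neg, ih, List.length_cons]
    ring

theorem coboundary_shuffle_left (y : Y) (ys : List Y) (z : Z) (zs : List Z)
    (c : List (Y × Z) → F) :
    coboundary (y :: ys) (fun ys => shuffle ys (z :: zs) c) = shuffle ys (z :: zs) c -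
      (coboundary ys (fun ys => shuffle ys (z :: zs) fun l => c ((y, z) :: l)) +
        (-1) ^ (ys.length + 1) * (shuffle ys zs (fun l => c ((y, z) :: l)) -
          coboundary (y :: ys) (fun ys => shuffle ys zs fun l => c ((y, z) :: l)))) := by
  have h : (fun ys => shuffle (y :: ys) (z :: zs) c) =
      (fun ys => shuffle ys (z :: zs) fun l => c ((y, z) :: l)) +
        fun ys => (-1) ^ ys.length * shuffle (y :: ys) zs fun l => c ((y, z) :: l) :=
    funext fun ys => shuffle_cons_cons y ys z zs c
  rw [coboundary_cons, h, map_add, coboundary_sign, coboundary_cons, sub_sub_cancel]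

theorem coboundary_shuffle_right (y : Y) (ys : List Y) (z : Z) (zs : List Z)
    (c : List (Y × Z) → F) :
    coboundary (z :: zs) (fun zs => shuffle (y :: ys) zs c) = shuffle (y :: ys) zs c -
      (shuffle ys zs (fun l => c ((y, z) :: l)) -
        coboundary (z :: zs) (fun zs => shuffle ys zs fun l => c ((y, z) :: l)) +
          (-1) ^ ys.length * coboundary zs
            (fun zs => shuffle (y :: ys) zs fun l => c ((y, z) :: l))) := by
  have h : (fun zs => shuffle (y :: ys) (z :: zs) c) =
      (fun zs => shuffle ys (z :: zs) fun l => c ((y, z) :: l)) +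
        (-1 : F) ^ ys.length • fun zs => shuffle (y :: ys) zs fun l => c ((y, z) :: l) :=
    funext fun zs => shuffle_cons_cons y ys z zs c
  rw [coboundary_cons, h, map_add, map_smul, smul_eq_mul, coboundary_cons z zs, sub_sub_cancel]

theorem shuffle_coboundary (ys : List Y) (zs : List Z) (c : List (Y × Z) → F) :
    shuffle ys zs (fun l => coboundary l c) = coboundary ys (fun ys => shuffle ys zs c) +
      (-1) ^ (ys.length + 1) * coboundary zs (fun zs => shuffle ys zs c) := by
  match ys, zs with
  | [], zs => simp [shuffle_nil_left, coboundary_unit]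
  | ys, [] => simp [shuffle_nil_right, ← Pi.zero_def]
  | y :: ys, z :: zs =>
    have hcone : (fun l => coboundary ((y, z) :: l) c) =
        c - fun l => coboundary l fun l => c ((y, z) :: l) := rfl
    rw [shuffle_cons_cons, hcone, map_sub, map_sub, shuffle_coboundary ys (z :: zs),
      shuffle_coboundary (y :: ys) zs, coboundary_shuffle_left, coboundary_shuffle_right,
      List.length_cons]
    ring
  termination_by ys.length + zs.length

theorem shuffle_cons_cons_of_smul {c c' : List (Y × Z) → F} {y : Y} {z : Z} (k : F)
    (h : ∀ l, c ((y, z) :: l) = k * c' ((y, z) :: l)) (ys : List Y) (zs : List Z) :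
    shuffle (y :: ys) (z :: zs) c = k * shuffle (y :: ys) (z :: zs) c' := by
  have h' : (fun l => c ((y, z) :: l)) = k • fun l => c' ((y, z) :: l) := funext h
  rw [shuffle_cons_cons, shuffle_cons_cons, h', map_smul, map_smul, smul_eq_mul, smul_eq_mul]
  ring

theorem shuffle_diffCupProd (as : List (Y → F)) (bs : List (Z → F)) (ys : List Y) (zs : List Z)
    (hys : ys.length = as.length + 1) (hzs : zs.length = bs.length + 1) :
    shuffle ys zs (diffCupProd (as.map (· ∘ Prod.fst) ++ bs.map (· ∘ Prod.snd))) =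
      diffCupProd as ys * diffCupProd bs zs := by
  match as, bs, ys, zs, hys, hzs with
  | [], [], [y], [z], _, _ =>
    simp [shuffle_cons_cons, shuffle_nil_left, shuffle_nil_right, diffCupProd]
  | [], b :: bs, [y], z :: z' :: zs, _, hzs =>
    have ih := shuffle_diffCupProd [] bs [y] (z' :: zs) rfl (by simpa using hzs)
    have hone : diffCupProd ([] : List (Y → F)) [y] = 1 := by simp [diffCupProd]
    rw [hone, one_mul, List.map_nil, List.nil_append] at ih ⊢
    rw [shuffle_cons_cons, shuffle_nil_left, if_neg (by simp), List.map_cons, diffCupProd,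
      shuffle_cons_cons_of_smul (b z' - b z) (fun _ => rfl), ih, List.length_nil,
      diffCupProd, diffCup]
    ring
  | a :: as, bs, y :: y' :: ys, z :: zs, hys, hzs =>
    have ih := shuffle_diffCupProd as bs (y' :: ys) (z :: zs) (by simpa using hys) hzs
    rw [List.map_cons, List.cons_append, diffCupProd, shuffle_cons_cons,
      shuffle_cons_cons_of_smul (a y' - a y) (fun _ => rfl), ih]
    have hzero : shuffle (y :: y' :: ys) zs (fun l => diffCup (a ∘ Prod.fst)
        (diffCupProd (as.map (· ∘ Prod.fst) ++ bs.map (· ∘ Prod.snd))) ((y, z) :: l)) = 0 := by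
      match zs with
      | [] => rw [shuffle_nil_right]
      | z' :: zs =>
        rw [shuffle_cons_cons_of_smul (c' := 0) 0 (fun l => by simp [diffCup]), zero_mul]
    rw [hzero, diffCupProd, diffCup]
    ring
  termination_by as.length + bs.length

theorem map_coboundary {ι : Type*} (φ : (ι → F) →ₗ[F] F) (l : List Y) (c : List Y → ι → F) :
    φ (fun i => coboundary l fun l => c l i) = coboundary l fun l => φ (c l) := by
  induction l generalizing c with
  | nil => exact map_zero φ
  | cons x l ih =>
    rw [coboundary_cons, ← ih fun l => c (x :: l), ← map_sub]
    rfl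

theorem coboundary_map (f : Y → Z) (l : List Y) (c : List Z → F) :
    coboundary (l.map f) c = coboundary l fun l => c (l.map f) := by
  induction l generalizing c with
  | nil => rfl
  | cons x l ih => simp only [List.map_cons, coboundary_cons, ih]

theorem diffCupProd_map (f : Y → Z) (bs : List (Z → F)) (l : List Y) :
    diffCupProd bs (l.map f) = diffCupProd (bs.map (· ∘ f)) l := by
  induction bs generalizing l with
  | nil => simp [diffCupProd]
  | cons b bs ih =>
    match l with
    | [] | [_] => rfl
    | x :: y :: l => simp only [List.map_cons, diffCupProd, diffCup, ← ih]; rfl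

variable [PseudoMetricSpace Y] [PseudoMetricSpace Z] {as : List (Y → F)} {bs : List (Z → F)}
  {Es : List (Set Y)} {Es' : List (Set Z)} {m m' : ℕ} {η : ℝ}

theorem IsSmall.of_forall_mem_prod {ys : List Y} {zs : List Z} (hys : IsSmall η ys)
    (hzs : IsSmall η zs) {l : List (Y × Z)} (hl : ∀ p ∈ l, p.1 ∈ ys ∧ p.2 ∈ zs) : IsSmall η l :=
  fun p hp q hq => max_lt (hys _ (hl p hp).1 _ (hl q hq).1) (hzs _ (hl p hp).2 _ (hl q hq).2)

/- Künneth: a primitive `c` of the cross product can be integrated, by shuffles, against a linear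
functional which vanishes on the relative coboundaries of `Z` but not on the cup product there; the
result is a primitive on `Y`. -/
theorem diffCupProd_append_notMem_relCoboundaries
    (has : diffCupProd as ∉ relCoboundaries F Es as.length η)
    (hbs : diffCupProd bs ∉ relCoboundaries F Es' bs.length η) :
    diffCupProd (as.map (· ∘ Prod.fst) ++ bs.map (· ∘ Prod.snd)) ∉
      relCoboundaries F (Es.map (Prod.fst ⁻¹' ·) ++ Es'.map (Prod.snd ⁻¹' ·))
        (as.length + bs.length) η := by
  rintro ⟨c, hc, hprod⟩
  obtain ⟨φ, hφ, hφN⟩ := Submodule.exists_le_ker_of_notMem hbs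
  have hzero : ∀ ys zs, IsSmall η ys → IsSmall η zs →
      ys.length + zs.length = as.length + bs.length + 1 →
      ((∃ E ∈ Es, ∀ y ∈ ys, y ∈ E) ∨ ∃ E ∈ Es', ∀ z ∈ zs, z ∈ E) → shuffle ys zs c = 0 := by
    refine fun ys zs hys hzs hlen hE => shuffle_eq_zero fun l hl hmem =>
      hc l (hys.of_forall_mem_prod hzs hmem) (by lia) ?_
    rcases hE with ⟨E, hE, hyE⟩ | ⟨E, hE, hzE⟩
    · exact ⟨_, List.mem_append_left _ (List.mem_map_of_mem hE), fun p hp => hyE _ (hmem p hp).1⟩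
    · exact ⟨_, List.mem_append_right _ (List.mem_map_of_mem hE), fun p hp => hzE _ (hmem p hp).2⟩
  refine has ⟨fun ys => (φ (diffCupProd bs))⁻¹ * φ (fun zs => shuffle ys zs c), ?_, ?_⟩
  · intro ys hys hlen hE
    rw [mul_eq_zero]
    refine Or.inr (hφN ((mem_relCoboundaries_congr fun zs hzs hlen' => ?_).1 (zero_mem _)))
    rw [hzero ys zs hys hzs (by lia) (.inl hE), Pi.zero_apply]
  · intro ys hys hlen
    have hmem : diffCupProd as ys • diffCupProd bs -
        (fun zs => coboundary ys fun ys => shuffle ys zs c) ∈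
          relCoboundaries F Es' bs.length η := by
      refine ⟨(-1 : F) ^ (ys.length + 1) • fun zs => shuffle ys zs c, ?_, ?_⟩
      · intro zs hzs hlen' hE
        rw [Pi.smul_apply, hzero ys zs hys hzs (by lia) (.inr hE), smul_zero]
      · intro zs hzs hlen'
        rw [map_smul, smul_eq_mul, Pi.sub_apply, Pi.smul_apply, smul_eq_mul,
          ← shuffle_diffCupProd as bs ys zs hlen hlen', sub_eq_iff_eq_add',
          ← shuffle_coboundary, ← sub_eq_zero, ← map_sub]
        exact shuffle_eq_zero fun l hl hmem => sub_eq_zero.2 <|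
          hprod l (hys.of_forall_mem_prod hzs hmem) (by lia)
    have hφmem := hφN hmem
    rw [LinearMap.mem_ker, map_sub, map_smul, sub_eq_zero, map_coboundary, smul_eq_mul] at hφmem
    have hsmul : (fun ys => (φ (diffCupProd bs))⁻¹ * φ (fun zs => shuffle ys zs c)) =
      (φ (diffCupProd bs))⁻¹ • fun ys => φ (fun zs => shuffle ys zs c) := rfl
    rw [hsmul, map_smul, ← hφmem, smul_eq_mul, mul_comm, mul_inv_cancel_right₀ hφ]

theorem IsEssential.prod {gs : List (Y → ℝ)} {gs' : List (Z → ℝ)} (h : IsEssential F gs)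
    (h' : IsEssential F gs') :
    IsEssential F (gs.map (· ∘ Prod.fst) ++ gs'.map (· ∘ Prod.snd)) := by
  intro η hη
  have hprod := diffCupProd_append_notMem_relCoboundaries (as := gs.map (sublevelIndicator F))
    (bs := gs'.map (sublevelIndicator F)) (Es := gs.map farSet) (Es' := gs'.map farSet) (η := η)
    (by simpa only [List.length_map] using h η hη) (by simpa only [List.length_map] using h' η hη)
  simp only [List.map_append, List.map_map, List.length_append, List.length_map] at hprod ⊢
  exact hprod

theorem IsEssential.of_comp {f : Y → Z} (hf : UniformContinuous f) {gs : List (Z → ℝ)}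
    (h : IsEssential F (gs.map (· ∘ f))) : IsEssential F gs := by
  rintro η hη ⟨c, hc, hw⟩
  obtain ⟨δ, hδ, hf⟩ := Metric.uniformContinuous_iff.1 hf η hη
  have hsmall : ∀ l, IsSmall δ l → IsSmall η (l.map f) := fun l hl => by
    simp only [IsSmall, List.forall_mem_map]
    exact fun x hx y hy => hf (hl x hx y hy)
  refine h δ hδ ⟨fun l => c (l.map f), ?_, ?_⟩
  · rintro l hl hlen ⟨E, hE, hlE⟩
    obtain ⟨g, hg, rfl⟩ : ∃ g ∈ gs, farSet (g ∘ f) = E := by simpa using hE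
    refine hc _ (hsmall l hl) (by simpa using hlen) ⟨_, List.mem_map_of_mem hg, ?_⟩
    exact List.forall_mem_map.2 hlE
  · intro l hl hlen
    have hcomp : ((gs.map (· ∘ f)).map (sublevelIndicator F)) =
        (gs.map (sublevelIndicator F)).map (· ∘ f) := by
      simp only [List.map_map]
      rfl
    rw [hcomp, ← diffCupProd_map, hw _ (hsmall l hl) (by simpa using hlen), coboundary_map]

/-- The functions `u ↦ g (u i)` on the power `Kⁿ`, for `g` in the list `gs`. -/
def powerFunctions {K : Type*} (gs : List (K → ℝ)) (n : ℕ) : List ((Fin n → K) → ℝ) :=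
  (List.finRange n).flatMap fun i => gs.map fun g u => g (u i)

theorem IsEssential.power {K : Type*} [PseudoMetricSpace K] {gs : List (K → ℝ)}
    (h : IsEssential F gs) (n : ℕ) : IsEssential F (powerFunctions gs (n + 1)) := by
  induction n with
  | zero =>
    refine IsEssential.of_comp (f := fun (y : K) (_ : Fin 1) => y)
      (uniformContinuous_pi.2 fun _ => uniformContinuous_id) ?_
    have hpow : (powerFunctions gs 1).map (· ∘ fun (y : K) (_ : Fin 1) => y) = gs := by
      simp [powerFunctions, List.finRange_succ, Function.comp_def]
    rwa [hpow]
  | succ n ih =>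
    refine IsEssential.of_comp (f := fun p : K × (Fin (n + 1) → K) => Fin.cons p.1 p.2)
      (uniformContinuous_pi.2 (Fin.cases uniformContinuous_fst
        fun i => (Pi.uniformContinuous_proj _ i).comp uniformContinuous_snd)) ?_
    have hpow : (powerFunctions gs (n + 2)).map
        (· ∘ fun p : K × (Fin (n + 1) → K) => (Fin.cons p.1 p.2 : Fin (n + 2) → K)) =
          gs.map (· ∘ Prod.fst) ++ (powerFunctions gs (n + 1)).map (· ∘ Prod.snd) := by
      simp [powerFunctions, List.finRange_succ (n := n + 1), Function.comp_def, List.map_flatMap,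
        List.flatMap_map]
    rw [hpow]
    exact h.prod ih

end Kunneth

section LowerBound

theorem exists_isEssential_singleton (F : Type*) [Field F] {Y : Type*} [MetricSpace Y]
    [CompactSpace Y] (hY : topDim Y ≠ 0) : ∃ g : Y → ℝ, Continuous g ∧ IsEssential F [g] := by
  have hconn : ∃ x₀ : Y, ¬ (connectedComponent x₀).Subsingleton := by
    by_contra! h
    have := totallyDisconnectedSpace_iff_connectedComponent_subsingleton.2 h
    exact hY (nonpos_iff_eq_zero.1 topDim_le_zero_of_totallyDisconnected)
  obtain ⟨x₀, hx₀⟩ := hconn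
  obtain ⟨x, hx, y, hy, hxy⟩ := not_subsingleton_iff.1 hx₀
  rw [connectedComponent_eq hx] at hy
  have hdist : 0 < dist x y := dist_pos.2 hxy
  let g : Y → ℝ := fun t => dist x t / dist x y - 1 / 2
  have hgx : g x = -1 / 2 := by simp [g]; norm_num
  have hgy : g y = 1 / 2 := by simp only [g, div_self hdist.ne']; norm_num
  refine ⟨g, by fun_prop, fun η hη => ?_⟩
  rintro ⟨c, hc, hw⟩
  let φ : Y → F := fun t => sublevelIndicator F g t - c [t]
  have hφ : ∀ s t, dist s t < η → φ t = φ s := by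
    intro s t hst
    have h := hw [s, t] (by simp [IsSmall, hst, dist_comm t s, hη.lt]) rfl
    simp only [List.map_cons, List.map_nil, diffCupProd, diffCup, List.length_singleton, if_true,
      mul_one, coboundary_cons, coboundary_nil, sub_zero] at h
    linear_combination h
  have hloc : IsLocallyConstant φ := (IsLocallyConstant.iff_eventually_eq φ).2 fun s =>
    (Metric.eventually_nhds_iff.2 ⟨η, hη, fun t ht => hφ s t (by rwa [dist_comm])⟩)
  have hxy_eq : φ x = φ y :=
    hloc.apply_eq_of_isPreconnected isPreconnected_connectedComponent mem_connectedComponent hy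
  have hvanish : ∀ t, t ∈ farSet g → c [t] = 0 := fun t ht =>
    hc [t] (by simpa [IsSmall] using hη) rfl ⟨farSet g, by simp, by simpa using ht⟩
  simp only [φ] at hxy_eq
  rw [hvanish x (by norm_num [farSet, hgx]), hvanish y (by norm_num [farSet, hgy])] at hxy_eq
  norm_num [sublevelIndicator, hgx, hgy] at hxy_eq

theorem IsEssential.length_le_mdim {K F : Type*} [Field F] [MetricSpace K] [CompactSpace K]
    [CompactSpace X] {gs : List (K → ℝ)} (h : IsEssential F gs) (hc : ∀ g ∈ gs, Continuous g)
    {d : X → X → ℝ} (hd : IsCompatMetric d) {T : X → X} {π : X → K} (hπ : Continuous π)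
    {w : ∀ N : ℕ, (Fin N → K) → X} (hw : ∀ N, Continuous (w N))
    (hπw : ∀ N u (i : Fin N), π (T^[i.val] (w N u)) = u i) : gs.length ≤ mdim T d := by
  obtain ⟨ε, hε, hgε⟩ : ∃ ε > 0, ∀ x y, d x y < ε → ∀ i, |gs.get i (π x) - gs.get i (π y)| < 1 :=
    letI := hd.toMetricSpace
    exists_abs_sub_lt_of_dist_lt (g := fun i x => gs.get i (π x))
      (fun i => (hc _ (gs.get_mem i)).comp hπ) one_pos
  obtain ⟨C, hC, hdC⟩ := hd.exists_bound
  refine le_mdim_of_le_widim hε fun N => le_widim hC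
    (fun x y => dynDist_le hC fun i _ => hdC _ _) fun β hβ hβε => ?_
  have hlen : (powerFunctions gs (N + 1)).length = (N + 1) * gs.length := by
    simp [powerFunctions, List.length_flatMap]
  have hmem : ∀ G ∈ powerFunctions gs (N + 1), ∃ i, ∃ g ∈ gs, G = fun u => g (u i) := by
    simp [powerFunctions, eq_comm]
  rw [← hlen]
  refine ((h.power N).length_le_ord (fun G hG => ?_) (hβ.preimage (hw (N + 1))) ?_).trans
    (ord_image_preimage_le _ β)
  · obtain ⟨i, g, hg, rfl⟩ := hmem G hG
    exact (hc g hg).comp (continuous_apply i)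
  · rintro _ ⟨V, hV, rfl⟩ G hG u hu v hv hGu
    obtain ⟨i, g, hg, rfl⟩ := hmem G hG
    obtain ⟨j, rfl⟩ := List.get_of_mem hg
    have hlt := hgε _ _ ((le_dynDist hdC T i.2 _ _).trans_lt (hβε V hV _ hu _ hv)) j
    rw [hπw, hπw, abs_lt] at hlt
    linarith

/-- The bi-infinite word with the entries of `u` at the places `0, …, N - 1` and `a` elsewhere. -/
def padWord {K : Type*} (a : K) (N : ℕ) (u : Fin N → K) : ℤ → K
  | .ofNat j => if h : j < N then u ⟨j, h⟩ else a
  | .negSucc _ => a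

theorem continuous_padWord {K : Type*} [TopologicalSpace K] (a : K) (N : ℕ) :
    Continuous (padWord a N) := by
  refine continuous_pi fun j => ?_
  match j with
  | .ofNat j =>
    simp only [padWord]
    split_ifs <;> fun_prop
  | .negSucc _ => exact continuous_const

theorem shift_iterate_apply {K : Type*} (i : ℕ) (x : ℤ → K) (j : ℤ) :
    (shift K)^[i] x j = x (j + i) := by
  induction i generalizing x with
  | zero => simp
  | succ i ih => rw [Function.iterate_succ_apply, ih, shift, add_assoc, ← Nat.cast_succ]

theorem shift_iterate_padWord {K : Type*} (a : K) (N : ℕ) (u : Fin N → K) (i : Fin N) :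
    (shift K)^[i.val] (padWord a N u) 0 = u i := by
  rw [shift_iterate_apply, zero_add]
  exact dif_pos i.2

theorem mdim_shift_le {K : Type*} [MetricSpace K] [CompactSpace K] {k : ℕ} (hk : topDim K ≤ k)
    {d : (ℤ → K) → (ℤ → K) → ℝ} (hd : IsCompatMetric d) : mdim (shift K) d ≤ k :=
  mdim_le_of_topDim_le hd hk continuous_apply (fun _ _ => funext) fun _ _ => rfl

theorem IsEssential.length_le_mdim_shift {K F : Type*} [Field F] [MetricSpace K] [CompactSpace K]
    [Nonempty K] {gs : List (K → ℝ)} (h : IsEssential F gs) (hc : ∀ g ∈ gs, Continuous g)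
    {d : (ℤ → K) → (ℤ → K) → ℝ} (hd : IsCompatMetric d) : gs.length ≤ mdim (shift K) d :=
  h.length_le_mdim hc hd (continuous_apply 0) (continuous_padWord (Classical.arbitrary K))
    (shift_iterate_padWord _)

variable {K L : Type*} [MetricSpace K] [CompactSpace K] [MetricSpace L] [CompactSpace L]
  {d : (ℤ → K) × (ℤ → L) → (ℤ → K) × (ℤ → L) → ℝ}

theorem mdim_shift_prodMap_le {k : ℕ} (hk : topDim (K × L) ≤ k) (hd : IsCompatMetric d) :
    mdim (Prod.map (shift K) (shift L)) d ≤ k :=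
  mdim_le_of_topDim_le hd hk (π := fun j x => (x.1 j, x.2 j)) (by fun_prop)
    (fun _ _ h => Prod.ext (funext fun j => (Prod.ext_iff.1 (h j)).1)
      (funext fun j => (Prod.ext_iff.1 (h j)).2)) fun _ _ => rfl

theorem IsEssential.length_le_mdim_shift_prodMap {F : Type*} [Field F] [Nonempty K] [Nonempty L]
    {gs : List (K × L → ℝ)} (h : IsEssential F gs) (hc : ∀ g ∈ gs, Continuous g)
    (hd : IsCompatMetric d) : gs.length ≤ mdim (Prod.map (shift K) (shift L)) d := by
  refine h.length_le_mdim hc hd (π := fun x => (x.1 0, x.2 0)) (by fun_prop)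
    (w := fun N u => (padWord (Classical.arbitrary K) N fun i => (u i).1,
      padWord (Classical.arbitrary L) N fun i => (u i).2))
    (fun N => ((continuous_padWord _ N).comp (by fun_prop)).prodMk
      ((continuous_padWord _ N).comp (by fun_prop))) fun N u i => ?_
  rw [Prod.map_iterate]
  exact Prod.ext (shift_iterate_padWord _ _ _ _) (shift_iterate_padWord _ _ _ _)

end LowerBound

section ProductDimension

/-- `φ` agrees on `B` with a continuous map defined everywhere which has no zeros. -/
def HasNonvanishingExtension {Y E : Type*} [TopologicalSpace Y] [TopologicalSpace E] [Zero E]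
    (B : Set Y) (φ : Y → E) : Prop :=
  ∃ Φ : Y → E, Continuous Φ ∧ (∀ y, Φ y ≠ 0) ∧ EqOn Φ φ B

/-- The closed set where the product map `(f, f')` leaves the open unit polydisc. -/
def outerRegion {P P' : Type*} (f : P → ℂ) (f' : P' → ℂ) : Set (P × P') :=
  {p | 1 ≤ ‖f p.1‖ ∨ 1 ≤ ‖f' p.2‖}

/-- The barycentric coordinates, translated so as to sum to zero, of a point of the plane of a
triangle; the point is encoded as the complex number formed by the first two of them. -/
def baryCoord (w : ℂ) : Fin 3 → ℝ := ![w.re, w.im, -w.re - w.im]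

theorem continuous_baryCoord : Continuous baryCoord := by
  refine continuous_pi fun q => ?_
  fin_cases q
  · exact Complex.continuous_re
  · exact Complex.continuous_im
  · exact Complex.continuous_re.neg.sub Complex.continuous_im

theorem sum_baryCoord (w : ℂ) : ∑ q, baryCoord w q = 0 := by
  simp [Fin.sum_univ_three, baryCoord]

theorem eq_zero_of_baryCoord_nonneg {w : ℂ} (h : ∀ q, 0 ≤ baryCoord w q) : w = 0 := by
  have h0 : 0 ≤ w.re := h 0
  have h1 : 0 ≤ w.im := h 1
  have h2 : 0 ≤ -w.re - w.im := h 2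
  exact Complex.ext (by rw [Complex.zero_re]; linarith) (by rw [Complex.zero_im]; linarith)

theorem one_le_norm_of_baryCoord_eq {w : ℂ} {q : Fin 3} (h : baryCoord w q = -2) : 1 ≤ ‖w‖ := by
  have hre := abs_le.1 (Complex.abs_re_le_norm w)
  have him := abs_le.1 (Complex.abs_im_le_norm w)
  have hq : w.re = -2 ∨ w.im = -2 ∨ -w.re - w.im = -2 := by
    fin_cases q
    exacts [.inl h, .inr (.inl h), .inr (.inr h)]
  rcases hq with hq | hq | hq <;> linarith

/-- The gauge of a pair of points in the planes of two triangles, with respect to the product of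
the triangles: it equals `2` on the boundary of the product, in the chart `faceChart`. -/
noncomputable def pairGauge (w : ℂ × ℂ) : ℝ :=
  Finset.univ.sup' Finset.univ_nonempty fun q => max (-baryCoord w.1 q) (-baryCoord w.2 q)

theorem continuous_pairGauge : Continuous pairGauge :=
  Continuous.finset_sup'_apply _ fun q _ =>
    ((continuous_apply q).comp (continuous_baryCoord.comp continuous_fst)).neg.max
      ((continuous_apply q).comp (continuous_baryCoord.comp continuous_snd)).neg

theorem pairGauge_le_iff {w : ℂ × ℂ} {r : ℝ} :
    pairGauge w ≤ r ↔ (∀ q, -baryCoord w.1 q ≤ r) ∧ ∀ q, -baryCoord w.2 q ≤ r := by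
  simp [pairGauge, forall_and]

theorem exists_baryCoord_eq_pairGauge (w : ℂ × ℂ) :
    (∃ q, -baryCoord w.1 q = pairGauge w) ∨ ∃ q, -baryCoord w.2 q = pairGauge w := by
  obtain ⟨q, -, hq⟩ := Finset.exists_mem_eq_sup' Finset.univ_nonempty
    fun q => max (-baryCoord w.1 q) (-baryCoord w.2 q)
  rcases max_choice (-baryCoord w.1 q) (-baryCoord w.2 q) with h | h
  · exact .inl ⟨q, h.symm.trans hq.symm⟩
  · exact .inr ⟨q, h.symm.trans hq.symm⟩

theorem pairGauge_pos {w : ℂ × ℂ} (hw : w ≠ 0) : 0 < pairGauge w := by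
  by_contra! h
  obtain ⟨h₁, h₂⟩ := pairGauge_le_iff.1 h
  exact hw (Prod.ext (eq_zero_of_baryCoord_nonneg fun q => neg_nonpos.1 (h₁ q))
    (eq_zero_of_baryCoord_nonneg fun q => neg_nonpos.1 (h₂ q)))

/-- The point of the triangle on the ray from the barycentre through `w`, shrunk by `r`. -/
noncomputable def scaledPoint (w : ℂ) {r : ℝ} (hr : 0 < r) (h : ∀ q, -baryCoord w q ≤ r) :
    stdSimplex ℝ (Fin 3) where
  val q := 1 / 3 + baryCoord w q / (3 * r)
  property := by
    refine ⟨fun q => ?_, ?_⟩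
    · have := (le_div_iff₀ (by positivity : 0 < 3 * r)).2 (by linarith [h q] :
        -(1 / 3) * (3 * r) ≤ baryCoord w q)
      linarith
    · rw [Finset.sum_add_distrib, ← Finset.sum_div _ (baryCoord w), sum_baryCoord]
      norm_num

theorem scaledPoint_apply {w : ℂ} {r : ℝ} (hr : 0 < r) (h : ∀ q, -baryCoord w q ≤ r) (q : Fin 3) :
    scaledPoint w hr h q = 1 / 3 + baryCoord w q / (3 * r) := rfl

theorem scaledPoint_apply_eq_zero {w : ℂ} {r : ℝ} (hr : 0 < r) (h : ∀ q, -baryCoord w q ≤ r)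
    {q : Fin 3} (hq : -baryCoord w q = r) : scaledPoint w hr h q = 0 := by
  rw [scaledPoint_apply, neg_eq_iff_eq_neg.1 hq]
  field_simp
  norm_num

theorem card_add_card_le_five_iff {ι κ : Type*} {s u : Finset ι} {t v : Finset κ}
    (hs : s.card = 3) (ht : t.card = 3) (hu : u ⊆ s) (hv : v ⊆ t) :
    u.card + v.card ≤ 5 ↔ u ≠ s ∨ v ≠ t := by
  have hus := Finset.card_le_card hu
  have hvt := Finset.card_le_card hv
  have hu' : u = s ↔ 3 ≤ u.card :=
    ⟨fun h => by rw [h, hs], fun h => Finset.eq_of_subset_of_card_le hu (hs.trans_le h)⟩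
  have hv' : v = t ↔ 3 ≤ v.card :=
    ⟨fun h => by rw [h, ht], fun h => Finset.eq_of_subset_of_card_le hv (ht.trans_le h)⟩
  rw [Ne, Ne, hu', hv']
  omega

variable {ι κ : Type*} [Fintype ι] [Fintype κ]

/-- The affine chart of the face of a simplex with vertices `e 0, e 1, e 2`. It sends the
barycentre of the face to `0`, and it is scaled so that the boundary of the face goes to points of
norm at least `1`. -/
noncomputable def faceChart (e : Fin 3 → ι) (p : stdSimplex ℝ ι) : ℂ :=
  ⟨6 * (p (e 0) - 1 / 3), 6 * (p (e 1) - 1 / 3)⟩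

theorem continuous_faceChart (e : Fin 3 → ι) : Continuous (faceChart e) :=
  Complex.equivRealProdCLM.symm.continuous.comp
    ((((continuous_stdSimplex_apply (e 0)).sub continuous_const).const_mul 6).prodMk
      (((continuous_stdSimplex_apply (e 1)).sub continuous_const).const_mul 6))

theorem faceChart_map {e : Fin 3 → ι} (he : Function.Injective e) (u : stdSimplex ℝ (Fin 3)) :
    faceChart e (stdSimplex.map e u) = faceChart id u := by
  simp only [faceChart, stdSimplex_map_apply_of_injective he, id_eq]

theorem baryCoord_faceChart (u : stdSimplex ℝ (Fin 3)) (q : Fin 3) :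
    baryCoord (faceChart id u) q = 6 * (u q - 1 / 3) := by
  have hsum : u 0 + u 1 + u 2 = 1 := by rw [← Fin.sum_univ_three, stdSimplex.sum_eq_one]
  fin_cases q
  · rfl
  · rfl
  · change -(6 * (u 0 - 1 / 3)) - 6 * (u 1 - 1 / 3) = 6 * (u 2 - 1 / 3)
    linarith

theorem one_le_norm_faceChart {u : stdSimplex ℝ (Fin 3)} {q : Fin 3} (hq : u q = 0) :
    1 ≤ ‖faceChart id u‖ :=
  one_le_norm_of_baryCoord_eq (q := q) (by rw [baryCoord_faceChart, hq]; norm_num)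

theorem pairGauge_faceChart {u v : stdSimplex ℝ (Fin 3)}
    (h : (∃ q, u q = 0) ∨ ∃ q, v q = 0) : pairGauge (faceChart id u, faceChart id v) = 2 := by
  refine le_antisymm (pairGauge_le_iff.2 ⟨fun q => ?_, fun q => ?_⟩) ?_
  · linarith [baryCoord_faceChart u q, stdSimplex.zero_le u q]
  · linarith [baryCoord_faceChart v q, stdSimplex.zero_le v q]
  · rcases h with ⟨q, hq⟩ | ⟨q, hq⟩
    · have := (pairGauge_le_iff.1 (le_refl (pairGauge (faceChart id u, faceChart id v)))).1 q
      linarith [baryCoord_faceChart u q]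
    · have := (pairGauge_le_iff.1 (le_refl (pairGauge (faceChart id u, faceChart id v)))).2 q
      linarith [baryCoord_faceChart v q]

theorem exists_retraction_boundary :
    ∃ r : C({w : ℂ × ℂ // w ≠ 0}, stdSimplex ℝ (Fin 3) × stdSimplex ℝ (Fin 3)),
      (∀ w, (∃ q, (r w).1 q = 0) ∨ ∃ q, (r w).2 q = 0) ∧
      ∀ u v h, ((∃ q, u q = 0) ∨ ∃ q, v q = 0) →
        r ⟨(faceChart id u, faceChart id v), h⟩ = (u, v) := by
  have hle : ∀ w : ℂ × ℂ, (∀ q, -baryCoord w.1 q ≤ pairGauge w) ∧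
      ∀ q, -baryCoord w.2 q ≤ pairGauge w := fun w => pairGauge_le_iff.1 le_rfl
  have hcont : ∀ π : ℂ × ℂ → ℂ, Continuous π → Continuous fun (w : {w : ℂ × ℂ // w ≠ 0}) q =>
      1 / 3 + baryCoord (π w) q / (3 * pairGauge w) := fun π hπ =>
    continuous_pi fun q => continuous_const.add <|
      ((continuous_apply q).comp (continuous_baryCoord.comp (hπ.comp continuous_subtype_val))).div
        ((continuous_pairGauge.comp continuous_subtype_val).const_mul 3)
        fun w => (mul_pos three_pos (pairGauge_pos w.2)).ne'
  refine ⟨⟨fun w => (scaledPoint w.1.1 (pairGauge_pos w.2) (hle w.1).1,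
    scaledPoint w.1.2 (pairGauge_pos w.2) (hle w.1).2),
    ((hcont _ continuous_fst).subtype_mk _).prodMk ((hcont _ continuous_snd).subtype_mk _)⟩,
    fun w => ?_, fun u v h huv => ?_⟩
  · rcases exists_baryCoord_eq_pairGauge w.1 with ⟨q, hq⟩ | ⟨q, hq⟩
    · exact .inl ⟨q, scaledPoint_apply_eq_zero (pairGauge_pos w.2) (hle w.1).1 hq⟩
    · exact .inr ⟨q, scaledPoint_apply_eq_zero (pairGauge_pos w.2) (hle w.1).2 hq⟩
  · have heq : ∀ (u' : stdSimplex ℝ (Fin 3)) q, 1 / 3 + baryCoord (faceChart id u') q /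
        (3 * pairGauge (faceChart id u, faceChart id v)) = u' q := fun u' q => by
      rw [pairGauge_faceChart huv, baryCoord_faceChart]
      ring
    exact Prod.ext (stdSimplex.ext (funext (heq u))) (stdSimplex.ext (funext (heq v)))

theorem exists_map_eq_of_carrier_subset {e : κ ↪ ι} {p : stdSimplex ℝ ι}
    (hp : carrier p ⊆ Finset.univ.map e) : ∃ u, stdSimplex.map e u = p := by
  have hoff : ∀ i, i ∉ range e → p i = 0 := fun i hi =>
    notMem_carrier.1 fun h => hi (by simpa using hp h)
  have hsum : ∑ q, p (e q) = 1 := by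
    rw [← stdSimplex.sum_eq_one p]
    exact Fintype.sum_of_injective e e.injective _ _ hoff fun _ => rfl
  refine ⟨⟨fun q => p (e q), fun q => stdSimplex.zero_le p _, hsum⟩, ?_⟩
  ext i
  by_cases hi : i ∈ range e
  · obtain ⟨q, rfl⟩ := hi
    exact stdSimplex_map_apply_of_injective e.injective _ _
  · rw [stdSimplex_map_apply_of_notMem_range _ hi, hoff i hi]

theorem carrier_map_subset {e : κ ↪ ι} (u : stdSimplex ℝ κ) :
    carrier (stdSimplex.map e u) ⊆ Finset.univ.map e := by
  rw [carrier_map_of_injective e.injective]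
  exact Finset.map_subset_map.2 (Finset.subset_univ _)

theorem carrier_map_ne_iff {e : κ ↪ ι} {u : stdSimplex ℝ κ} :
    carrier (stdSimplex.map e u) ≠ Finset.univ.map e ↔ ∃ q, u q = 0 := by
  rw [carrier_map_of_injective e.injective]
  change (carrier u).map e ≠ _ ↔ _
  rw [(Finset.map_injective e).ne_iff, Ne, Finset.eq_univ_iff_forall, not_forall]
  simp only [notMem_carrier]

theorem isClosed_setOf_carrier_subset (s : Finset ι) :
    IsClosed {p : stdSimplex ℝ ι | carrier p ⊆ s} := by
  have h : {p : stdSimplex ℝ ι | carrier p ⊆ s} = ⋂ i ∉ s, {p | p i = 0} := by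
    ext p
    simp only [mem_iInter, mem_ofPred_eq, Finset.subset_iff, ← notMem_carrier, not_imp_not]
  rw [h]
  exact isClosed_biInter fun i _ => isClosed_eq (continuous_stdSimplex_apply i) continuous_const

section Glue

variable {P P' : Type*} [TopologicalSpace P] [TopologicalSpace P']

variable {ρ : C(P, stdSimplex ℝ ι)} {ρ' : C(P', stdSimplex ℝ κ)}

theorem HasNonvanishingExtension.exists_map {e : Fin 3 ↪ ι} {e' : Fin 3 ↪ κ}
    (h : HasNonvanishingExtension (outerRegion (faceChart e ∘ ρ) (faceChart e' ∘ ρ'))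
      (Prod.map (faceChart e ∘ ρ) (faceChart e' ∘ ρ'))) :
    ∃ ψ : C(P × P', stdSimplex ℝ ι × stdSimplex ℝ κ),
      (∀ p, carrier (ψ p).1 ⊆ Finset.univ.map e ∧ carrier (ψ p).2 ⊆ Finset.univ.map e' ∧
        (carrier (ψ p).1 ≠ Finset.univ.map e ∨ carrier (ψ p).2 ≠ Finset.univ.map e')) ∧
      ∀ x y, carrier (ρ x) ⊆ Finset.univ.map e → carrier (ρ' y) ⊆ Finset.univ.map e' →
        (carrier (ρ x) ≠ Finset.univ.map e ∨ carrier (ρ' y) ≠ Finset.univ.map e') →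
          ψ (x, y) = (ρ x, ρ' y) := by
  obtain ⟨Φ, hΦ, hΦ0, hΦeq⟩ := h
  obtain ⟨r, hr, hr_eq⟩ := exists_retraction_boundary
  have hψ : Continuous fun p => Prod.map (stdSimplex.map e) (stdSimplex.map e') (r ⟨Φ p, hΦ0 p⟩) :=
    ((stdSimplex.continuous_map e).prodMap (stdSimplex.continuous_map e')).comp
      (r.continuous.comp (hΦ.subtype_mk hΦ0))
  refine ⟨⟨_, hψ⟩, fun p => ⟨carrier_map_subset _, carrier_map_subset _,
    (hr _).imp carrier_map_ne_iff.2 carrier_map_ne_iff.2⟩, fun x y hx hy hxy => ?_⟩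
  · obtain ⟨u, hu⟩ := exists_map_eq_of_carrier_subset hx
    obtain ⟨v, hv⟩ := exists_map_eq_of_carrier_subset hy
    have hcx : faceChart e (ρ x) = faceChart id u := by rw [← hu, faceChart_map e.injective]
    have hcy : faceChart e' (ρ' y) = faceChart id v := by rw [← hv, faceChart_map e'.injective]
    rw [← hu, ← hv, carrier_map_ne_iff, carrier_map_ne_iff] at hxy
    have hval : Φ (x, y) = (faceChart id u, faceChart id v) := by
      rw [hΦeq (show (x, y) ∈ outerRegion _ _ from ?_)]
      · exact Prod.ext hcx hcy
      · refine hxy.imp (fun ⟨_, hq⟩ => ?_) fun ⟨_, hq⟩ => ?_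
        · exact (one_le_norm_faceChart hq).trans_eq (congrArg norm hcx.symm)
        · exact (one_le_norm_faceChart hq).trans_eq (congrArg norm hcy.symm)
    calc Prod.map (stdSimplex.map e) (stdSimplex.map e') (r ⟨Φ (x, y), hΦ0 (x, y)⟩)
        = Prod.map (stdSimplex.map e) (stdSimplex.map e') (u, v) := by
          rw [← hr_eq u v (hval ▸ hΦ0 (x, y)) hxy]
          simp only [hval]
      _ = (ρ x, ρ' y) := by rw [Prod.map_apply, hu, hv]

theorem exists_map_of_card_eq_three
    (hE : ∀ (f : P → ℂ) (f' : P' → ℂ), Continuous f → Continuous f' →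
      HasNonvanishingExtension (outerRegion f f') (Prod.map f f'))
    (ρ : C(P, stdSimplex ℝ ι)) (ρ' : C(P', stdSimplex ℝ κ)) {s : Finset ι} {t : Finset κ}
    (hs : s.card = 3) (ht : t.card = 3) :
    ∃ ψ : C(P × P', stdSimplex ℝ ι × stdSimplex ℝ κ),
      (∀ p, carrier (ψ p).1 ⊆ s ∧ carrier (ψ p).2 ⊆ t ∧
        (carrier (ψ p).1).card + (carrier (ψ p).2).card ≤ 5) ∧
      ∀ x y, carrier (ρ x) ⊆ s → carrier (ρ' y) ⊆ t →
        (carrier (ρ x)).card + (carrier (ρ' y)).card ≤ 5 → ψ (x, y) = (ρ x, ρ' y) := by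
  obtain ⟨e, rfl⟩ : ∃ e : Fin 3 ↪ ι, Finset.univ.map e = s :=
    ⟨(s.equivFinOfCardEq hs).symm.toEmbedding.trans (.subtype _), by
      rw [← Finset.map_map, Finset.map_univ_equiv]
      exact s.attach_map_val⟩
  obtain ⟨e', rfl⟩ : ∃ e' : Fin 3 ↪ κ, Finset.univ.map e' = t :=
    ⟨(t.equivFinOfCardEq ht).symm.toEmbedding.trans (.subtype _), by
      rw [← Finset.map_map, Finset.map_univ_equiv]
      exact t.attach_map_val⟩
  obtain ⟨ψ, hψ, hψ_eq⟩ := (hE (faceChart e ∘ ρ) (faceChart e' ∘ ρ')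
    ((continuous_faceChart e).comp ρ.continuous)
    ((continuous_faceChart e').comp ρ'.continuous)).exists_map
  exact ⟨ψ, fun p => ⟨(hψ p).1, (hψ p).2.1,
    (card_add_card_le_five_iff hs ht (hψ p).1 (hψ p).2.1).2 (hψ p).2.2⟩,
    fun x y hx hy h => hψ_eq x y hx hy ((card_add_card_le_five_iff hs ht hx hy).1 h)⟩

theorem exists_superset_of_card_le_three (hι : 3 ≤ Fintype.card ι) {u : Finset ι}
    (hu : u.card ≤ 3) : ∃ s : {s : Finset ι // s.card = 3}, u ⊆ s :=
  let ⟨s, hs⟩ := Finset.exists_superset_card_eq hu hι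
  ⟨⟨s, hs.2⟩, hs.1⟩

theorem exists_map_carrier_subset
    (hE : ∀ (f : P → ℂ) (f' : P' → ℂ), Continuous f → Continuous f' →
      HasNonvanishingExtension (outerRegion f f') (Prod.map f f'))
    (ρ : C(P, stdSimplex ℝ ι)) (ρ' : C(P', stdSimplex ℝ κ)) (hι : 3 ≤ Fintype.card ι)
    (hκ : 3 ≤ Fintype.card κ) (hρ : ∀ x, (carrier (ρ x)).card ≤ 3)
    (hρ' : ∀ y, (carrier (ρ' y)).card ≤ 3) :
    ∃ ψ : C(P × P', stdSimplex ℝ ι × stdSimplex ℝ κ), ∀ p,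
      carrier (ψ p).1 ⊆ carrier (ρ p.1) ∧ carrier (ψ p).2 ⊆ carrier (ρ' p.2) ∧
        (carrier (ψ p).1).card + (carrier (ψ p).2).card ≤ 5 := by
  choose ψ hψ hψ_eq using fun (s : {s : Finset ι // s.card = 3})
    (t : {t : Finset κ // t.card = 3}) => exists_map_of_card_eq_three hE ρ ρ' s.2 t.2
  choose s hs using fun x => exists_superset_of_card_le_three hι (hρ x)
  choose t ht using fun y => exists_superset_of_card_le_three hκ (hρ' y)
  have hagree : ∀ x y s' t', carrier (ρ x) ⊆ s'.1 → carrier (ρ' y) ⊆ t'.1 →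
      ψ (s x) (t y) (x, y) = ψ s' t' (x, y) := fun x y s' t' hs' ht' => by
    by_cases h : (carrier (ρ x)).card + (carrier (ρ' y)).card ≤ 5
    · rw [hψ_eq _ _ x y (hs x) (ht y) h, hψ_eq _ _ x y hs' ht' h]
    · have hsx : s x = s' := Subtype.ext <|
        (Finset.eq_of_subset_of_card_le (hs x) (by grind)).symm.trans
          (Finset.eq_of_subset_of_card_le hs' (by grind))
      have hty : t y = t' := Subtype.ext <|
        (Finset.eq_of_subset_of_card_le (ht y) (by grind)).symm.trans
          (Finset.eq_of_subset_of_card_le ht' (by grind))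
      rw [hsx, hty]
  have hcont : Continuous fun p : P × P' => ψ (s p.1) (t p.2) p := by
    refine (locallyFinite_of_finite
        fun a : {s : Finset ι // s.card = 3} × {t : Finset κ // t.card = 3} =>
          {x | carrier (ρ x) ⊆ a.1.1} ×ˢ {y | carrier (ρ' y) ⊆ a.2.1}).continuous ?_ ?_ ?_
    · exact eq_univ_of_forall fun p => mem_iUnion.2 ⟨(s p.1, t p.2), hs p.1, ht p.2⟩
    · exact fun a => ((isClosed_setOf_carrier_subset _).preimage ρ.continuous).prod
        ((isClosed_setOf_carrier_subset _).preimage ρ'.continuous)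
    · exact fun a => (ψ a.1 a.2).continuous.continuousOn.congr fun p hp =>
        hagree p.1 p.2 a.1 a.2 hp.1 hp.2
  refine ⟨⟨_, hcont⟩, fun p => ?_⟩
  obtain ⟨h₁, h₂, h⟩ := hψ (s p.1) (t p.2) p
  by_cases hp : (carrier (ρ p.1)).card + (carrier (ρ' p.2)).card ≤ 5
  · have heq := hψ_eq (s p.1) (t p.2) p.1 p.2 (hs p.1) (ht p.2) hp
    exact ⟨by simp [heq], by simp [heq], h⟩
  · rw [Finset.eq_of_subset_of_card_le (hs p.1) (by grind),
      Finset.eq_of_subset_of_card_le (ht p.2) (by grind)]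
    exact ⟨h₁, h₂, h⟩

end Glue

theorem topDim_prod_le_three {P P' : Type*} [MetricSpace P] [CompactSpace P] [MetricSpace P']
    [CompactSpace P'] (hP : topDim P ≤ 2) (hP' : topDim P' ≤ 2)
    (hE : ∀ (f : P → ℂ) (f' : P' → ℂ), Continuous f → Continuous f' →
      HasNonvanishingExtension (outerRegion f f') (Prod.map f f')) :
    topDim (P × P') ≤ 3 := by
  rcases isEmpty_or_nonempty (P × P') with _ | _
  · exact topDim_le_zero_of_totallyDisconnected.trans zero_le
  rw [← Nat.cast_ofNat, topDim_le_iff]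
  intro α hα
  obtain ⟨δ, hδ, hball⟩ := lebesgue_number_lemma_of_metric_sUnion isCompact_univ hα.1 hα.2.ge
  obtain ⟨n, ρ, hn, hρ, hfine⟩ := exists_fine_map_stdSimplex (k := 2) hP hδ
  obtain ⟨n', ρ', hn', hρ', hfine'⟩ := exists_fine_map_stdSimplex (k := 2) hP' hδ
  obtain ⟨ψ, hψ⟩ := exists_map_carrier_subset hE ρ ρ' (by rwa [Fintype.card_fin])
    (by rwa [Fintype.card_fin]) hρ hρ'
  have hpos : ∀ {i p}, 0 < (ψ p).1 i → 0 < ρ p.1 i := fun {i p} h =>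
    mem_carrier.1 ((hψ p).1 (mem_carrier.2 h))
  have hpos' : ∀ {i p}, 0 < (ψ p).2 i → 0 < ρ' p.2 i := fun {i p} h =>
    mem_carrier.1 ((hψ p).2.1 (mem_carrier.2 h))
  obtain ⟨β, hβ, hord, hmem⟩ := exists_isOpenCover_ord_le_of_carrier (A := Bool)
    (n := Bool.rec n n') (m := 3) (fun
      | false => ⟨fun p => (ψ p).1, continuous_fst.comp ψ.continuous⟩
      | true => ⟨fun p => (ψ p).2, continuous_snd.comp ψ.continuous⟩) fun p => by
    have h₁ := (carrier_nonempty (ψ p).1).card_pos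
    have h₂ := (carrier_nonempty (ψ p).2).card_pos
    have h := (hψ p).2.2
    rw [Fintype.sum_bool]
    change ((carrier (ψ p).2).card - 1) + ((carrier (ψ p).1).card - 1) ≤ 3
    omega
  refine ⟨β, hβ, fun W hW => ?_, hord⟩
  obtain ⟨i, hi⟩ := hmem W hW
  rcases W.eq_empty_or_nonempty with rfl | ⟨p, hp⟩
  · obtain ⟨U, hU, -⟩ := hball (Classical.arbitrary _) (mem_univ _)
    exact ⟨U, hU, empty_subset U⟩
  · obtain ⟨U, hU, hpU⟩ := hball p (mem_univ p)
    refine ⟨U, hU, fun p' hp' => hpU ?_⟩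
    exact max_lt (hfine (i false) _ _ (hpos (hi false p' hp')) (hpos (hi false p hp)))
      (hfine' (i true) _ _ (hpos' (hi true p' hp')) (hpos' (hi true p hp)))

end ProductDimension

section Extension

theorem HasNonvanishingExtension.of_homotopy {Y E : Type*} [TopologicalSpace Y] [CompactSpace Y]
    [T2Space Y] [AddCommGroup E] [TopologicalSpace E] [IsTopologicalAddGroup E] [T1Space E]
    {B : Set Y} (hB : IsClosed B) {H : Y → ℝ → E} (hH : Continuous fun q : Y × ℝ => H q.1 q.2)
    (hH0 : ∀ y ∈ B, ∀ t ∈ Icc (0 : ℝ) 1, H y t ≠ 0)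
    (h : HasNonvanishingExtension B (H · 0)) : HasNonvanishingExtension B (H · 1) := by
  obtain ⟨Φ, hΦ, hΦ0, hΦB⟩ := h
  let K : Y → ℝ → E := fun y t => H y t + (Φ y - H y 0)
  have hK : Continuous fun q : Y × ℝ => K q.1 q.2 :=
    hH.add ((hΦ.sub (hH.comp (.prodMk_left 0))).comp continuous_fst)
  have hKB : ∀ y ∈ B, ∀ t, K y t = H y t := fun y hy t => by
    simp only [K, hΦB hy, sub_self, add_zero]
  let V : Set Y := Prod.fst '' ({q : Y × ℝ | K q.1 q.2 = 0} ∩ univ ×ˢ Icc (0 : ℝ) 1)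
  have hV : IsClosed V :=
    (((isCompact_univ.prod isCompact_Icc).inter_left
      (isClosed_singleton.preimage hK)).image continuous_fst).isClosed
  have hVB : Disjoint V B := by
    rw [Set.disjoint_left]
    rintro _ ⟨⟨y, t⟩, ⟨hzero, -, ht⟩, rfl⟩ hy
    exact hH0 y hy t ht ((hKB y hy t).symm.trans hzero)
  obtain ⟨u, hu0, hu1, hu⟩ := exists_continuous_zero_one_of_isClosed hV hB hVB
  refine ⟨fun y => K y (u y), hK.comp (continuous_id.prodMk u.continuous), fun y hy => hΦ0 y ?_,
    fun y hy => ?_⟩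
  · have huy : u y = 0 := hu0 ⟨(y, u y), ⟨hy, mem_univ y, hu y⟩, rfl⟩
    have hyu : H y (u y) + (Φ y - H y 0) = 0 := hy
    rwa [huy, add_sub_cancel] at hyu
  · change K y (u y) = H y 1
    rw [hKB y hy, hu1 hy, Pi.one_apply]

theorem lineMap_ne_zero_of_inner_pos {E : Type*} [NormedAddCommGroup E] [InnerProductSpace ℝ E]
    {u v : E} (h : 0 < inner ℝ v u) {t : ℝ} (ht : t ∈ Icc (0 : ℝ) 1) :
    AffineMap.lineMap u v t ≠ 0 := by
  intro h0
  have hinner : (1 - t) * inner ℝ v u + t * ‖v‖ ^ 2 = 0 := by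
    rw [← real_inner_self_eq_norm_sq, ← inner_smul_right, ← inner_smul_right, ← inner_add_right,
      ← AffineMap.lineMap_apply_module, h0, inner_zero_right]
  have hv : 0 < ‖v‖ := norm_pos_iff.2 fun hv => by simp [hv] at h
  rcases ht.2.eq_or_lt with rfl | ht1
  · simp [hv.ne'] at hinner
  · have := mul_pos (sub_pos.2 ht1) h
    nlinarith [mul_nonneg ht.1 (sq_nonneg ‖v‖)]

/-- The linear automorphism of `ℂ × ℂ` which is the identity on the diagonal and multiplication by
`ω` on the antidiagonal; `ω = 1` is the identity and `ω = -1` the swap. -/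
noncomputable def antidiagonalScale (ω : ℂ) (z : ℂ × ℂ) : ℂ × ℂ :=
  ((z.1 + z.2) / 2 + ω * ((z.1 - z.2) / 2), (z.1 + z.2) / 2 - ω * ((z.1 - z.2) / 2))

theorem antidiagonalScale_ne_zero {ω : ℂ} (hω : ω ≠ 0) {z : ℂ × ℂ} (hz : z ≠ 0) :
    antidiagonalScale ω z ≠ 0 := by
  intro h
  have hfst : (z.1 + z.2) / 2 + ω * ((z.1 - z.2) / 2) = 0 := congrArg Prod.fst h
  have hsnd : (z.1 + z.2) / 2 - ω * ((z.1 - z.2) / 2) = 0 := congrArg Prod.snd h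
  have hadd : z.1 + z.2 = 0 := by linear_combination hfst + hsnd
  have hsub : z.1 - z.2 = 0 :=
    (mul_eq_zero.1 (by linear_combination hfst - hsnd : ω * (z.1 - z.2) = 0)).resolve_left hω
  exact hz (Prod.ext (by rw [Prod.fst_zero]; linear_combination (hadd + hsub) / 2)
    (by rw [Prod.snd_zero]; linear_combination (hadd - hsub) / 2))

theorem antidiagonalScale_one (z : ℂ × ℂ) : antidiagonalScale 1 z = z := by
  ext <;> simp only [antidiagonalScale] <;> ring

theorem antidiagonalScale_neg_one (z : ℂ × ℂ) : antidiagonalScale (-1) z = z.swap := by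
  ext <;> simp only [antidiagonalScale, Prod.fst_swap, Prod.snd_swap] <;> ring

-- Conjugate `(z₁, z₂) ↦ (z₁ ^ p, z₂)` by a path from the swap to the identity.
theorem HasNonvanishingExtension.move_pow {Y : Type*} [TopologicalSpace Y] [CompactSpace Y]
    [T2Space Y] {p : ℕ} {B : Set Y} (hB : IsClosed B) {a b : Y → ℂ} (ha : Continuous a)
    (hb : Continuous b) (hab : ∀ y ∈ B, (a y, b y) ≠ 0)
    (h : HasNonvanishingExtension B fun y => (a y, b y ^ p)) :
    HasNonvanishingExtension B fun y => (a y ^ p, b y) := by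
  let ω : ℝ → ℂ := fun t => -Complex.exp (Real.pi * t * Complex.I)
  have hω0 : ω 0 = -1 := by simp [ω]
  have hω1 : ω 1 = 1 := by simp [ω]
  have hω : ∀ t, ω t ≠ 0 := fun t => neg_ne_zero.2 (Complex.exp_ne_zero _)
  let H : Y → ℝ → ℂ × ℂ := fun y t =>
    antidiagonalScale (ω t) (Prod.map (· ^ p) id (antidiagonalScale (ω t) (a y, b y)))
  have hH : Continuous fun q : Y × ℝ => H q.1 q.2 := by
    simp only [H, ω, antidiagonalScale, Prod.map]
    fun_prop
  have hH0 : ∀ y ∈ B, ∀ t ∈ Icc (0 : ℝ) 1, H y t ≠ 0 := fun y hy t _ => by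
    refine antidiagonalScale_ne_zero (hω t) fun h0 => ?_
    refine antidiagonalScale_ne_zero (hω t) (hab y hy) (Prod.ext ?_ (congrArg Prod.snd h0 :))
    exact eq_zero_of_pow_eq_zero (congrArg Prod.fst h0)
  have hstart : (H · 0) = fun y => (a y, b y ^ p) := by
    funext y
    simp only [H, hω0, antidiagonalScale_neg_one, Prod.map, Prod.swap, id]
  have hend : (H · 1) = fun y => (a y ^ p, b y) := by
    funext y
    simp only [H, hω1, antidiagonalScale_one, Prod.map, id]
  rw [← hstart] at h
  rw [← hend]
  exact h.of_homotopy hB hH hH0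

section OuterRegion

variable {P P' : Type*} {f : P → ℂ} {f' : P' → ℂ}

theorem isClosed_outerRegion [TopologicalSpace P] [TopologicalSpace P'] (hf : Continuous f)
    (hf' : Continuous f') : IsClosed (outerRegion f f') :=
  (isClosed_le continuous_const (hf.comp continuous_fst).norm).union
    (isClosed_le continuous_const (hf'.comp continuous_snd).norm)

theorem prodMap_ne_zero_of_mem_outerRegion {p : P × P'} (hp : p ∈ outerRegion f f') :
    Prod.map f f' p ≠ 0 := by
  rintro h
  rcases hp with hp | hp
  · rw [show f p.1 = 0 from congrArg Prod.fst h, norm_zero] at hp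
    exact absurd hp (not_le.2 one_pos)
  · rw [show f' p.2 = 0 from congrArg Prod.snd h, norm_zero] at hp
    exact absurd hp (not_le.2 one_pos)

theorem outerRegion_pow {d : ℕ} (hd : d ≠ 0) : outerRegion f (f' ^ d) = outerRegion f f' := by
  ext p
  simp only [outerRegion, mem_ofPred_eq, Pi.pow_apply, norm_pow,
    one_le_pow_iff_of_nonneg (norm_nonneg _) hd]

/-- Where `f` leaves the open unit disc, `G` points into the half-plane in the direction of `f`. -/
def Follows (G f : P → ℂ) : Prop := ∀ x, 1 ≤ ‖f x‖ → 0 < inner ℝ (f x) (G x)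

/-- Some continuous map following `f` has a continuous `p`-th root in a neighbourhood of its
zeros. -/
def HasRootNearZeros [TopologicalSpace P] (p : ℕ) (f : P → ℂ) : Prop :=
  ∃ (G : P → ℂ) (O : Set P) (g : P → ℂ), Continuous G ∧ Follows G f ∧ IsOpen O ∧
    (∀ x, G x = 0 → x ∈ O) ∧ ContinuousOn g O ∧ ∀ x ∈ O, g x ^ p = G x

theorem Follows.refl (f : P → ℂ) : Follows f f := fun x hx =>
  real_inner_self_pos.2 fun h0 => by norm_num [h0] at hx

theorem Follows.const_smul {G : P → ℂ} (h : Follows G f) {c : ℝ} (hc : 0 < c) :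
    Follows (c • G) f := fun x hx => by
  rw [Pi.smul_apply, real_inner_smul_right]
  exact mul_pos hc (h x hx)

theorem HasNonvanishingExtension.glue [TopologicalSpace P]
    [TopologicalSpace P'] {V : Set P} {k h H : P → ℂ}
    (hk : Continuous k) (hf' : Continuous f') (hkV : ∀ x, k x = 0 → x ∈ V)
    (hHk : ∀ x ∈ closure V, H x = k x) (hh : ∀ x ∈ frontier V, 1 ≤ ‖h x‖)
    (hfV : ∀ x ∈ V, ‖f x‖ < 1)
    (hext : HasNonvanishingExtension (outerRegion h f') (Prod.map H f')) :
    HasNonvanishingExtension (outerRegion f f') (Prod.map k f') := by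
  classical
  obtain ⟨Ψ, hΨ, hΨ0, hΨeq⟩ := hext
  have hΨk : ∀ p : P × P', p.1 ∈ closure V → p ∈ outerRegion h f' → Ψ p = Prod.map k f' p :=
    fun p hpV hp => (hΨeq hp).trans (Prod.ext (hHk p.1 hpV) rfl)
  refine ⟨(Prod.fst ⁻¹' V).piecewise Ψ (Prod.map k f'), ?_, fun p => ?_, fun p hp => ?_⟩
  · refine hΨ.piecewise (fun p hp => ?_) (hk.prodMap hf')
    rw [← isOpenMap_fst.preimage_frontier_eq_frontier_preimage continuous_fst] at hp
    exact hΨk p (frontier_subset_closure hp) (.inl (hh p.1 hp))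
  · by_cases hpV : p.1 ∈ V
    · rw [piecewise_eq_of_mem (Prod.fst ⁻¹' V) _ _ hpV]
      exact hΨ0 p
    · rw [piecewise_eq_of_notMem (Prod.fst ⁻¹' V) _ _ hpV]
      exact fun h0 => hpV (hkV p.1 (congrArg Prod.fst h0))
  · by_cases hpV : p.1 ∈ V
    · rw [piecewise_eq_of_mem (Prod.fst ⁻¹' V) _ _ hpV]
      exact hΨk p (subset_closure hpV) (hp.imp (fun h1 => absurd h1 (hfV p.1 hpV).not_ge) id)
    · rw [piecewise_eq_of_notMem (Prod.fst ⁻¹' V) _ _ hpV]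

end OuterRegion

section

variable {P P' : Type*} [TopologicalSpace P] [CompactSpace P] [T2Space P] [TopologicalSpace P']
  {f : P → ℂ} {f' : P' → ℂ}

theorem HasNonvanishingExtension.of_follows [CompactSpace P'] [T2Space P'] {G : P → ℂ} {G' : P' → ℂ}
    (hf : Continuous f) (hf' : Continuous f') (hG : Continuous G) (hG' : Continuous G')
    (hGf : Follows G f) (hGf' : Follows G' f')
    (h : HasNonvanishingExtension (outerRegion f f') (Prod.map G G')) :
    HasNonvanishingExtension (outerRegion f f') (Prod.map f f') := by
  let H : P × P' → ℝ → ℂ × ℂ := fun p t =>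
    (AffineMap.lineMap (G p.1) (f p.1) t, AffineMap.lineMap (G' p.2) (f' p.2) t)
  have hH : Continuous fun q : (P × P') × ℝ => H q.1 q.2 := by
    simp only [H, AffineMap.lineMap_apply_module]
    fun_prop
  have hH0 : ∀ p ∈ outerRegion f f', ∀ t ∈ Icc (0 : ℝ) 1, H p t ≠ 0 := by
    rintro p (hp | hp) t ht h0
    · exact lineMap_ne_zero_of_inner_pos (hGf _ hp) ht (congrArg Prod.fst h0)
    · exact lineMap_ne_zero_of_inner_pos (hGf' _ hp) ht (congrArg Prod.snd h0)
  have hstart : (H · 0) = Prod.map G G' := by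
    funext p
    simp only [H, AffineMap.lineMap_apply_zero, Prod.map]
  have hend : (H · 1) = Prod.map f f' := by
    funext p
    simp only [H, AffineMap.lineMap_apply_one, Prod.map]
  rw [← hstart] at h
  rw [← hend]
  exact h.of_homotopy (isClosed_outerRegion hf hf') hH hH0

theorem exists_pow_eq_smul_near_zeros {p : ℕ} (hp : p ≠ 0) {G g : P → ℂ} {U : Set P}
    (hG : Continuous G) (hU : IsOpen U) (hGU : ∀ x, G x = 0 → x ∈ U) (hg : ContinuousOn g U)
    (hgG : ∀ x ∈ U, g x ^ p = G x) :
    ∃ V, (∀ x, G x = 0 → x ∈ V) ∧ closure V ⊆ U ∧ ∃ c : ℝ, 0 < c ∧ ∃ h : C(P, ℂ),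
      (∀ x ∈ closure V, h x ^ p = c • G x) ∧ ∀ x ∈ frontier V, 1 ≤ ‖h x‖ := by
  obtain ⟨V, hV, hGV, hVU⟩ := normal_exists_closure_subset
    (isClosed_singleton.preimage hG : IsClosed (G ⁻¹' {0})) hU hGU
  have hne : ∀ x ∈ frontier V, 0 < ‖g x‖ := fun x hx => norm_pos_iff.2 fun h0 => by
    have hx' : x ∈ closure V \ V := by rwa [← hV.frontier_eq]
    exact hx'.2 (hGV (by
      rw [mem_preimage, mem_singleton_iff, ← hgG x (hVU hx'.1), h0, zero_pow hp]))
  obtain ⟨a, ha, hag⟩ := (isClosed_frontier (s := V)).isCompact.exists_forall_le'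
    (hg.mono (frontier_subset_closure.trans hVU)).norm hne
  obtain ⟨h, hh⟩ := ContinuousMap.exists_restrict_eq isClosed_closure
    ⟨(closure V).domRestrict g, (hg.mono hVU).domRestrict⟩
  have hhg : ∀ x ∈ closure V, h x = g x := fun x hx => DFunLike.congr_fun hh ⟨x, hx⟩
  refine ⟨V, fun x hx => hGV hx, hVU, (a⁻¹) ^ p, by positivity, a⁻¹ • h, fun x hx => ?_,
    fun x hx => ?_⟩
  · rw [ContinuousMap.smul_apply, smul_pow, hhg x hx, hgG x (hVU hx)]
  · rw [ContinuousMap.smul_apply, norm_smul, hhg x (frontier_subset_closure hx), norm_inv,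
      Real.norm_of_nonneg ha.le, ← div_eq_inv_mul, one_le_div ha]
    exact hag x hx

theorem HasNonvanishingExtension.of_hasRootNearZeros [CompactSpace P'] [T2Space P'] {p : ℕ}
    (hp : p ≠ 0) (hf : Continuous f) (hf' : Continuous f') (hR : HasRootNearZeros p f)
    (hE : ∀ h : P → ℂ, Continuous h →
      HasNonvanishingExtension (outerRegion h (f' ^ p)) (Prod.map h (f' ^ p))) :
    HasNonvanishingExtension (outerRegion f f') (Prod.map f f') := by
  obtain ⟨G, O, g, hG, hGf, hO, hGO, hg, hgG⟩ := hR
  have hGU : ∀ x, G x = 0 → x ∈ O ∩ {x | ‖f x‖ < 1} := fun x hx =>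
    ⟨hGO x hx, show ‖f x‖ < 1 from lt_of_not_ge fun h1 => by simpa [hx] using hGf x h1⟩
  obtain ⟨V, hGV, hVU, c, hc, h, hhG, hh⟩ := exists_pow_eq_smul_near_zeros hp hG
    (hO.inter (isOpen_lt hf.norm continuous_const)) hGU (hg.mono inter_subset_left)
    fun x hx => hgG x hx.1
  have hext := hE h h.continuous
  rw [outerRegion_pow hp] at hext
  refine .of_follows hf hf' (hG.const_smul c) hf' (hGf.const_smul hc) (.refl f') ?_
  refine .glue (hG.const_smul c) hf'
    (fun x hx => hGV x ((smul_eq_zero.1 hx).resolve_left hc.ne')) hhG hh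
    (fun x hx => (hVU (subset_closure hx)).2) ?_
  exact hext.move_pow (isClosed_outerRegion h.continuous hf') (h.continuous.comp continuous_fst)
    (hf'.comp continuous_snd) fun _ => prodMap_ne_zero_of_mem_outerRegion

theorem HasNonvanishingExtension.of_forall_prime [CompactSpace P'] [T2Space P']
    (hR : ∀ p : ℕ, p.Prime → ∀ f : P → ℂ, Continuous f → HasRootNearZeros p f) {d : ℕ}
    (hd : d ≠ 0) {f' : P' → ℂ} (hf' : Continuous f') {G' : P' → ℂ} (hG' : Continuous G')
    (hG'0 : ∀ y, G' y ≠ 0) (hGf' : Follows G' (f' ^ d)) {f : P → ℂ} (hf : Continuous f) :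
    HasNonvanishingExtension (outerRegion f f') (Prod.map f f') := by
  induction d using induction_on_primes generalizing f f' with
  | zero => exact absurd rfl hd
  | one =>
    rw [pow_one] at hGf'
    exact .of_follows hf hf' hf hG' (.refl f) hGf' ⟨Prod.map f G', hf.prodMap hG',
      fun q h0 => hG'0 q.2 (congrArg Prod.snd h0), eqOn_refl _ _⟩
  | prime_mul p a hp ih =>
    refine .of_hasRootNearZeros hp.ne_zero hf hf' (hR p hp f hf) fun g hg => ?_
    exact ih (right_ne_zero_of_mul hd) (hf'.pow p) (by rwa [← pow_mul]) hg

end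

end Extension

section Crossing

/-- The number of times, counted with sign, that a short path from `z` to `w` avoiding `0` crosses
the cut of `Complex.arg`. Only half-planes are tested, and `re` only at `z`, so that the result is a
cup product of sublevel indicators. -/
noncomputable def cutCrossing (z w : ℂ) : ℤ :=
  if z.re ≤ 0 then (if 0 ≤ w.im then 1 else 0) - (if 0 ≤ z.im then 1 else 0) else 0

theorem abs_arg_sub_arg_sub_cutCrossing_le {z : ℂ} (hz : z ≠ 0) (w : ℂ) :
    |w.arg - z.arg - 2 * Real.pi * cutCrossing z w| ≤ 3 * Real.pi / 2 := by
  have hpi := Real.pi_pos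
  have hw := Complex.arg_mem_Ioc w
  have hz' := Complex.arg_mem_Ioc z
  have hwim : 0 ≤ w.im ↔ 0 ≤ w.arg := Complex.arg_nonneg_iff.symm
  have hzim : 0 ≤ z.im ↔ 0 ≤ z.arg := Complex.arg_nonneg_iff.symm
  have hzre : z.re ≤ 0 ↔ Real.pi / 2 ≤ |z.arg| := by
    rw [← not_lt, ← not_lt, Complex.abs_arg_lt_pi_div_two_iff]
    simp [hz]
  simp only [cutCrossing, hzre, hwim, hzim, le_abs]
  rw [abs_le]
  split_ifs <;> push_cast <;> constructor <;> grind

theorem arg_div_eq_sub_cutCrossing {z w : ℂ} (hz : z ≠ 0) (h : 0 < (w / z).re) :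
    (w / z).arg = w.arg - z.arg - 2 * Real.pi * cutCrossing z w := by
  have hw : w ≠ 0 := by
    rintro rfl
    simp at h
  have hsmall := abs_lt.1 (Complex.abs_arg_lt_pi_div_two_iff.2 (Or.inl h))
  have hangle : ((w.arg : ℝ) : Real.Angle) = ((z.arg + (w / z).arg : ℝ) : Real.Angle) := by
    rw [Real.Angle.coe_add, ← Complex.arg_mul_coe_angle hz (div_ne_zero hw hz),
      mul_div_cancel₀ w hz]
  obtain ⟨m, hm⟩ := Real.Angle.angle_eq_iff_two_pi_dvd_sub.1 hangle
  have hcross := abs_le.1 (abs_arg_sub_arg_sub_cutCrossing_le hz w)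
  have hlt : |(m - cutCrossing z w : ℤ)| < 1 := by
    have : |((m - cutCrossing z w : ℤ) : ℝ)| < 1 := by
      push_cast
      rw [abs_lt]
      constructor <;> nlinarith [Real.pi_pos]
    exact_mod_cast this
  rw [← sub_eq_zero.1 (Int.abs_lt_one_iff.1 hlt)]
  linarith

/-- Both points have a real part far from `0`, or both have an imaginary part far from `0`. -/
def FarPair (z w : ℂ) : Prop :=
  (1 / 2 ≤ |z.re| ∧ 1 / 2 ≤ |w.re|) ∨ (1 / 2 ≤ |z.im| ∧ 1 / 2 ≤ |w.im|)

theorem farPair_of_norm_sub_lt {z w : ℂ} (hz : 1 ≤ ‖z‖) (h : ‖w - z‖ < 1 / 10) : FarPair z w := by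
  have hre := (abs_sub_abs_le_abs_sub z.re w.re).trans_lt
    ((Complex.abs_re_le_norm (z - w)).trans_lt (norm_sub_rev w z ▸ h))
  have him := (abs_sub_abs_le_abs_sub z.im w.im).trans_lt
    ((Complex.abs_im_le_norm (z - w)).trans_lt (norm_sub_rev w z ▸ h))
  have hcoord : 6 / 10 ≤ |z.re| ∨ 6 / 10 ≤ |z.im| := by
    by_contra! hlt
    have hsq : 1 ≤ |z.re| ^ 2 + |z.im| ^ 2 := by
      rw [sq_abs, sq_abs, sq, sq, ← Complex.normSq_apply, ← Complex.sq_norm]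
      exact one_le_pow₀ hz
    nlinarith [abs_nonneg z.re, abs_nonneg z.im]
  exact hcoord.imp (fun h' => ⟨by linarith, by linarith⟩) fun h' => ⟨by linarith, by linarith⟩

theorem exists_farPair_and_abs_arg_sub_le {ε : ℝ} (hε : 0 < ε) : ∃ δ > 0, ∀ z w : ℂ, 1 ≤ ‖z‖ →
    ‖w - z‖ < δ → FarPair z w ∧ |w.arg - z.arg - 2 * Real.pi * cutCrossing z w| ≤ ε := by
  obtain ⟨δ, hδ, hcont⟩ := Metric.continuousAt_iff.1
    (Complex.continuousAt_arg Complex.one_mem_slitPlane) ε hε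
  refine ⟨min δ (1 / 10), by positivity, fun z w hz hzw => ?_⟩
  obtain ⟨hzwδ, hzw1⟩ := lt_min_iff.1 hzw
  have hz0 : z ≠ 0 := norm_pos_iff.1 (one_pos.trans_le hz)
  have hdiv : ‖w / z - 1‖ ≤ ‖w - z‖ := by
    rw [← div_self hz0, ← sub_div, norm_div]
    exact div_le_self (norm_nonneg _) hz
  have hre : 0 < (w / z).re := by
    have := abs_le.1 (Complex.abs_re_le_norm (w / z - 1))
    rw [Complex.sub_re, Complex.one_re] at this
    linarith
  refine ⟨farPair_of_norm_sub_lt hz hzw1, ?_⟩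
  rw [← arg_div_eq_sub_cutCrossing hz0 hre]
  simpa [Complex.arg_one] using (hcont (dist_eq_norm (w / z) 1 ▸ hdiv.trans_lt hzwδ)).le

variable {P : Type*} [PseudoMetricSpace P]

theorem exists_uniform_abs_arg_sub_le [CompactSpace P] {f : P → ℂ} (hf : Continuous f) {ε : ℝ}
    (hε : 0 < ε) : ∃ η > 0, ∀ x y, dist x y < η → 1 ≤ ‖f x‖ → FarPair (f x) (f y) ∧
      |(f y).arg - (f x).arg - 2 * Real.pi * cutCrossing (f x) (f y)| ≤ ε := by
  obtain ⟨δ, hδ, hclose⟩ := exists_farPair_and_abs_arg_sub_le hε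
  obtain ⟨η, hη, hunif⟩ := Metric.uniformContinuous_iff.1
    (CompactSpace.uniformContinuous_of_continuous hf) δ hδ
  refine ⟨η, hη, fun x y hxy hx => hclose _ _ hx ?_⟩
  rw [norm_sub_rev, ← dist_eq_norm]
  exact hunif hxy

/-- Near the diagonal, `d` times the crossing number of `f` agrees on far pairs with a function
which is a cocycle modulo `m`. The case `m = 0` is that of genuine cocycles. -/
def HasCrossingCocycle (m : ℤ) (d : ℕ) (f : P → ℂ) : Prop :=
  ∃ η > 0, ∃ e : P → P → ℤ,
    (∀ x y z, dist x y < η → dist y z < η → dist x z < η → m ∣ e y z - e x z + e x y) ∧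
    ∀ x y, dist x y < η → FarPair (f x) (f y) → e x y = d * cutCrossing (f x) (f y)

theorem isSmall_pair {η : ℝ} {x y : P} (h : dist x y < η) : IsSmall η [x, y] := by
  have hη := dist_nonneg.trans_lt h
  simp [IsSmall, hη, h, dist_comm y x]

theorem isSmall_triple {η : ℝ} {x y z : P} (hxy : dist x y < η) (hyz : dist y z < η)
    (hxz : dist x z < η) : IsSmall η [x, y, z] := by
  have hη := dist_nonneg.trans_lt hxy
  simp [IsSmall, hη, hxy, hyz, hxz, dist_comm y x, dist_comm z x, dist_comm z y]

/-- The pair of real functions whose common zeros are the zeros of `f`. The sign is chosen to make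
`cutCrossing` a cup product of their sublevel indicators. -/
def realPair (f : P → ℂ) : List (P → ℝ) := [fun x => (f x).re, fun x => -(f x).im]

theorem intCast_cutCrossing (F : Type*) [Field F] {Y : Type*} (f : Y → ℂ) (x y : Y) :
    (cutCrossing (f x) (f y) : F) = sublevelIndicator F (fun x => (f x).re) x *
      (sublevelIndicator F (fun x => -(f x).im) y -
        sublevelIndicator F (fun x => -(f x).im) x) := by
  simp only [cutCrossing, sublevelIndicator, neg_nonpos]
  split_ifs <;> simp

theorem exists_cutCrossing_eq_coboundary {F : Type*} [Field F] {f : P → ℂ}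
    (h : ¬ IsEssential F (realPair f)) : ∃ η > 0, ∃ c : P → P → F,
      (∀ x y, dist x y < η → FarPair (f x) (f y) → c x y = 0) ∧
      ∀ x y z, dist x y < η → dist y z < η → dist x z < η →
        (cutCrossing (f y) (f z) - cutCrossing (f x) (f z) + cutCrossing (f x) (f y) : F) =
          c y z - c x z + c x y := by
  simp only [IsEssential, not_forall, not_not] at h
  obtain ⟨η, hη, c, hc, hcob⟩ := h
  refine ⟨η, hη, fun x y => c [x, y], fun x y hxy hfar => ?_, fun x y z hxy hyz hxz => ?_⟩
  · refine hc [x, y] (isSmall_pair hxy) rfl ?_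
    rcases hfar with hre | him
    · exact ⟨farSet fun x => (f x).re, by simp [realPair], by simpa [farSet] using hre⟩
    · exact ⟨farSet fun x => -(f x).im, by simp [realPair], by simpa [farSet] using him⟩
  · have hxyz := hcob [x, y, z] (isSmall_triple hxy hyz hxz) rfl
    simp only [realPair, List.map_cons, List.map_nil, diffCupProd, diffCup, List.length_cons,
      List.length_nil, zero_add, if_true, mul_one, coboundary_cons, coboundary_nil,
      sub_zero] at hxyz
    simp only [intCast_cutCrossing]
    linear_combination hxyz

theorem hasCrossingCocycle_of_not_isEssential_zmod {p : ℕ} [Fact p.Prime] {f : P → ℂ}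
    (h : ¬ IsEssential (ZMod p) (realPair f)) : HasCrossingCocycle p 1 f := by
  obtain ⟨η, hη, c, hfar, hc⟩ := exists_cutCrossing_eq_coboundary h
  refine ⟨η, hη, fun x y => cutCrossing (f x) (f y) - ((c x y).val : ℤ),
    fun x y z hxy hyz hxz => ?_, fun x y hxy hxyfar => ?_⟩
  · rw [← ZMod.intCast_zmod_eq_zero_iff_dvd]
    push_cast
    simp only [ZMod.natCast_zmod_val]
    linear_combination hc x y z hxy hyz hxz
  · simp [hfar x y hxy hxyfar]

theorem exists_approx_finite_range [CompactSpace P] {S : Type*} [Finite S] (K : P → S) {δ : ℝ}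
    (hδ : 0 < δ) : ∃ r : P → P, (range r).Finite ∧ ∀ x, dist x (r x) < δ ∧ K (r x) = K x := by
  obtain ⟨t, -, ht, hcov⟩ := (isCompact_univ (X := P)).finite_cover_balls (half_pos hδ)
  have hcenter : ∀ x : P, ∃ a : t, dist x a < δ / 2 := fun x => by
    obtain ⟨a, ha, hxa⟩ := mem_iUnion₂.1 (hcov (mem_univ x))
    exact ⟨⟨a, ha⟩, hxa⟩
  choose center hcenter using hcenter
  have : Finite t := ht
  let code : P → t × S := fun x => (center x, K x)
  let r : P → P := fun x => rangeSplitting code ⟨code x, mem_range_self x⟩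
  have hr : ∀ x, code (r x) = code x := fun x => apply_rangeSplitting code _
  refine ⟨r, (finite_range (rangeSplitting code)).subset (range_subset_iff.2 fun x => ⟨_, rfl⟩),
    fun x => ⟨?_, congrArg Prod.snd (hr x)⟩⟩
  have hrx := hcenter (r x)
  rw [show center (r x) = center x from congrArg Prod.fst (hr x)] at hrx
  linarith [dist_triangle_right x (r x) (center x), hcenter x]

theorem exists_common_denominator {S : Set ℚ} (hS : S.Finite) :
    ∃ d : ℕ, d ≠ 0 ∧ ∀ q ∈ S, ∃ k : ℤ, (k : ℚ) = d * q := by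
  lift S to Finset ℚ using hS
  refine ⟨∏ q ∈ S, q.den, Finset.prod_ne_zero_iff.2 fun q _ => q.den_nz, fun q hq => ?_⟩
  obtain ⟨l, hl⟩ := Finset.dvd_prod_of_mem Rat.den hq
  refine ⟨l * q.num, ?_⟩
  rw [hl]
  push_cast
  rw [← Rat.mul_den_eq_num]
  ring

theorem exists_approx_cutCrossing [CompactSpace P] (f : P → ℂ) {δ : ℝ} (hδ : 0 < δ) :
    ∃ r : P → P, (range r).Finite ∧ (∀ x, dist x (r x) < δ) ∧
      (∀ x y, cutCrossing (f (r x)) (f (r y)) = cutCrossing (f x) (f y)) ∧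
      ∀ x y, FarPair (f (r x)) (f (r y)) ↔ FarPair (f x) (f y) := by
  obtain ⟨r, hr, hrx⟩ := exists_approx_finite_range (fun x =>
    ((f x).re ≤ 0, 0 ≤ (f x).im, 1 / 2 ≤ |(f x).re|, 1 / 2 ≤ |(f x).im|)) hδ
  simp only [Prod.mk.injEq] at hrx
  exact ⟨r, hr, fun x => (hrx x).1, fun x y => by simp only [cutCrossing, hrx],
    fun x y => by simp only [FarPair, hrx]⟩

theorem exists_hasCrossingCocycle_of_not_isEssential_rat [CompactSpace P] {f : P → ℂ}
    (h : ¬ IsEssential ℚ (realPair f)) : ∃ d : ℕ, d ≠ 0 ∧ HasCrossingCocycle 0 d f := by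
  obtain ⟨η, hη, c, hfar, hc⟩ := exists_cutCrossing_eq_coboundary h
  obtain ⟨r, hrfin, hr, hrcross, hrfar⟩ := exists_approx_cutCrossing f (by positivity : 0 < η / 3)
  have hrr : ∀ x y, dist x y < η / 3 → dist (r x) (r y) < η := fun x y hxy => by
    linarith [dist_triangle4_left x y (r x) (r y), hr x, hr y]
  obtain ⟨d, hd, hden⟩ := exists_common_denominator
    ((hrfin.prod hrfin).image fun q => c q.1 q.2)
  have hint : ∀ x y, ∃ k : ℤ, (k : ℚ) = d * c (r x) (r y) := fun x y =>
    hden _ ⟨(r x, r y), ⟨mem_range_self x, mem_range_self y⟩, rfl⟩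
  choose k hk using hint
  refine ⟨d, hd, η / 3, by positivity, fun x y => d * cutCrossing (f x) (f y) - k x y,
    fun x y z hxy hyz hxz => ?_, fun x y hxy hxyfar => ?_⟩
  · have hcxyz := hc (r x) (r y) (r z) (hrr _ _ hxy) (hrr _ _ hyz) (hrr _ _ hxz)
    simp only [hrcross] at hcxyz
    rw [zero_dvd_iff, ← Int.cast_inj (α := ℚ)]
    push_cast
    rw [hk, hk, hk]
    linear_combination (d : ℚ) * hcxyz
  · have hkxy : (k x y : ℚ) = 0 := by
      rw [hk, hfar _ _ (hrr _ _ hxy) ((hrfar x y).2 hxyfar), mul_zero]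
    simp only [Int.cast_eq_zero.1 hkxy, sub_zero]

end Crossing

section Roots

theorem continuous_diagonal {P Y : Type*} [PseudoMetricSpace P] [TopologicalSpace Y]
    {s : P → P → Y} (hs : ∀ b, Continuous (s b)) {r : ℝ} (hr : 0 < r)
    (hloc : ∀ b y, dist b y < r → s b y = s y y) : Continuous fun y => s y y := by
  refine continuous_iff_continuousAt.2 fun b => (hs b).continuousAt.congr ?_
  filter_upwards [Metric.ball_mem_nhds b hr] with y hy
  exact hloc b y (Metric.mem_ball'.1 hy)

theorem sum_smul_congr {ι E : Type*} [Fintype ι] [AddCommGroup E] [Module ℝ E]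
    (q : stdSimplex ℝ ι) {v w : ι → E} (h : ∀ i, 0 < q i → v i = w i) :
    ∑ i, q i • v i = ∑ i, q i • w i := by
  refine Finset.sum_congr rfl fun i _ => ?_
  rcases (stdSimplex.zero_le q i).eq_or_lt with h0 | h0
  · rw [← h0, zero_smul, zero_smul]
  · rw [h i h0]

theorem sum_smul_sub_const {ι E : Type*} [Fintype ι] [AddCommGroup E] [Module ℝ E]
    (q : stdSimplex ℝ ι) (v : ι → E) (w : E) :
    ∑ i, q i • (v i - w) = ∑ i, q i • v i - w := by
  simp only [smul_sub, Finset.sum_sub_distrib, ← Finset.sum_smul, stdSimplex.sum_eq_one, one_smul]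

theorem norm_sum_smul_sub_le {ι E : Type*} [Fintype ι] [SeminormedAddCommGroup E] [NormedSpace ℝ E]
    (q : stdSimplex ℝ ι) {v : ι → E} {w : E} {r : ℝ} (h : ∀ i, 0 < q i → ‖v i - w‖ ≤ r) :
    ‖∑ i, q i • v i - w‖ ≤ r := by
  calc ‖∑ i, q i • v i - w‖ ≤ ∑ i, q i * r := by
        rw [← sum_smul_sub_const]
        refine norm_sum_le_of_le _ fun i _ => ?_
        rw [norm_smul, Real.norm_of_nonneg (stdSimplex.zero_le q i)]
        rcases (stdSimplex.zero_le q i).eq_or_lt with h0 | h0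
        · simp only [← h0, zero_mul, le_refl]
        · exact mul_le_mul_of_nonneg_left (h i h0) h0.le
    _ = r := by rw [← Finset.sum_mul, stdSimplex.sum_eq_one, one_mul]

theorem exists_fine_map_stdSimplex_centers {K : Type*} [PseudoMetricSpace K] [CompactSpace K]
    [Nonempty K] {k : ℕ} (hk : topDim K ≤ k) {δ : ℝ} (hδ : 0 < δ) :
    ∃ (n : ℕ) (ρ : C(K, stdSimplex ℝ (Fin n))) (c : Fin n → K),
      (∀ x, (carrier (ρ x)).card ≤ k + 1) ∧ ∀ i x, 0 < ρ x i → dist x (c i) < δ := by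
  obtain ⟨n, ρ, -, hcard, hfine⟩ := exists_fine_map_stdSimplex hk hδ
  have hcenter : ∀ i, ∃ c : K, ∀ x, 0 < ρ x i → dist x c < δ := fun i => by
    by_cases hi : ∃ c, 0 < ρ c i
    · exact hi.imp fun c hc x hx => hfine i x c hx hc
    · exact ⟨Classical.arbitrary K, fun x hx => absurd ⟨x, hx⟩ hi⟩
  choose c hc using hcenter
  exact ⟨n, ρ, c, hcard, hc⟩

section Complex

theorem norm_circleExp_sub_le (a b : ℝ) : ‖(Circle.exp a - Circle.exp b : ℂ)‖ ≤ |a - b| := by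
  have hfactor : (Circle.exp a - Circle.exp b : ℂ) =
      Circle.exp b * (Complex.exp (Complex.I * ↑(a - b)) - 1) := by
    rw [mul_comm Complex.I, ← Circle.coe_exp, mul_sub_one, ← Circle.coe_mul, ← Circle.exp_add,
      add_sub_cancel]
  rw [hfactor, norm_mul, Circle.norm_coe, one_mul]
  exact Real.norm_exp_I_mul_ofReal_sub_one_le

theorem norm_smul_circleExp_arg (z : ℂ) : ‖z‖ • (Circle.exp z.arg : ℂ) = z := by
  rw [Circle.coe_exp, Complex.real_smul, Complex.norm_mul_exp_arg_mul_I]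

theorem inner_circleExp (a b : ℝ) :
    inner ℝ (Circle.exp a : ℂ) (Circle.exp b : ℂ) = Real.cos (b - a) := by
  rw [Complex.inner, ← Circle.coe_inv_eq_conj, ← Circle.exp_neg, mul_comm, ← Circle.coe_mul,
    ← Circle.exp_add, Circle.coe_exp, Complex.exp_ofReal_mul_I_re, neg_add_eq_sub]

theorem inner_pow_circleExp_pos {z : ℂ} (hz : z ≠ 0) {d : ℕ} {θ : ℝ}
    (h : |θ - d * z.arg| < Real.pi / 2) : 0 < inner ℝ (z ^ d) (Circle.exp θ : ℂ) := by
  rw [← norm_smul_circleExp_arg z, smul_pow, ← Circle.coe_pow, ← Circle.exp_natCast_mul,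
    real_inner_smul_left, inner_circleExp]
  exact mul_pos (pow_pos (norm_pos_iff.2 hz) d) (Real.cos_pos_of_mem_Ioo (abs_lt.1 h))

theorem exists_inner_pow_pow_pos (p : ℕ) :
    ∃ r > 0, ∀ u v : ℂ, ‖v‖ = 1 → ‖u - v‖ < r → 0 < inner ℝ (v ^ p) (u ^ p) := by
  have hcont : ContinuousAt (fun u : ℂ => (u ^ p).re) 1 := by fun_prop
  obtain ⟨r, hr, hpos⟩ := Metric.eventually_nhds_iff.1
    (hcont.eventually (lt_mem_nhds (by simp : (0 : ℝ) < ((1 : ℂ) ^ p).re)))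
  refine ⟨r, hr, fun u v hv huv => ?_⟩
  have hconj : v * starRingEnd ℂ v = 1 := by rw [Complex.mul_conj', hv]; norm_num
  rw [Complex.inner, map_pow, ← mul_pow]
  refine hpos ?_
  rwa [dist_eq_norm, ← hconj, ← sub_mul, norm_mul, RCLike.norm_conj, hv, mul_one]

end Complex

section Lift

variable {P : Type*} [PseudoMetricSpace P] [CompactSpace P] {f : P → ℂ}

theorem HasCrossingCocycle.exists_abs_arg_sub_le {m : ℤ} {d : ℕ} (h : HasCrossingCocycle m d f)
    (hf : Continuous f) {ε : ℝ} (hε : 0 < ε) : ∃ η > 0, ∃ e : P → P → ℤ,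
      (∀ x y z, dist x y < η → dist y z < η → dist x z < η → m ∣ e y z - e x z + e x y) ∧
      ∀ x y, dist x y < η → 1 ≤ ‖f x‖ →
        |d * (f y).arg - 2 * Real.pi * e x y - d * (f x).arg| ≤ d * ε := by
  obtain ⟨η, hη, e, he, hcross⟩ := h
  obtain ⟨η', hη', harg⟩ := exists_uniform_abs_arg_sub_le hf hε
  refine ⟨min η η', lt_min hη hη', e, fun x y z hxy hyz hxz =>
    he x y z (lt_min_iff.1 hxy).1 (lt_min_iff.1 hyz).1 (lt_min_iff.1 hxz).1,
    fun x y hxy hx => ?_⟩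
  obtain ⟨hfar, hle⟩ := harg x y (lt_min_iff.1 hxy).2 hx
  calc |d * (f y).arg - 2 * Real.pi * e x y - d * (f x).arg|
      = |d * ((f y).arg - (f x).arg - 2 * Real.pi * cutCrossing (f x) (f y))| := by
        rw [hcross x y (lt_min_iff.1 hxy).1 hfar]
        push_cast
        ring_nf
    _ ≤ d * ε := by
        rw [abs_mul, Nat.abs_cast]
        gcongr

-- A genuine cocycle lifts `d • arg ∘ f` locally to a real function, well defined modulo `2π`.
theorem HasCrossingCocycle.exists_nonvanishing_follows [Nonempty P] {k : ℕ} (hk : topDim P ≤ k)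
    {d : ℕ} (hd : d ≠ 0) (h : HasCrossingCocycle 0 d f) (hf : Continuous f) :
    ∃ G : P → ℂ, Continuous G ∧ (∀ x, G x ≠ 0) ∧ Follows G (f ^ d) := by
  obtain ⟨η, hη, e, he, harg⟩ := h.exists_abs_arg_sub_le hf
    (by positivity : 0 < Real.pi / (4 * d))
  obtain ⟨n, ρ, c, -, hρ⟩ := exists_fine_map_stdSimplex_centers hk (half_pos hη)
  let A : P → P → ℝ := fun b y =>
    ∑ j, ρ y j • (d * (f (c j)).arg - 2 * Real.pi * e b (c j))
  have hA : ∀ b, Continuous (A b) := fun b => continuous_finsetSum _ fun j _ =>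
    ((continuous_stdSimplex_apply j).comp ρ.continuous).smul continuous_const
  have hAshift : ∀ b y, dist b y < η / 2 → A b y = A y y - 2 * Real.pi * e b y := by
    intro b y hby
    rw [← sum_smul_sub_const]
    refine sum_smul_congr _ fun j hj => ?_
    have hyj := hρ j y hj
    have hcocycle := zero_dvd_iff.1 (he b y (c j) (by linarith) (by linarith)
      (by linarith [dist_triangle b y (c j)]))
    have hcocycle' : (e y (c j) - e b (c j) + e b y : ℝ) = 0 := by exact_mod_cast hcocycle
    linear_combination 2 * Real.pi * hcocycle'
  refine ⟨fun y => Circle.exp (A y y), ?_, fun y => Circle.coe_ne_zero _, fun y hy => ?_⟩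
  · refine continuous_diagonal (s := fun b y => (Circle.exp (A b y) : ℂ))
      (fun b => by fun_prop) (half_pos hη) fun b y hby => ?_
    simp only [hAshift b y hby, Circle.exp_sub, Circle.exp_two_pi_mul_int, div_one]
  · rw [Pi.pow_apply, norm_pow, one_le_pow_iff_of_nonneg (norm_nonneg _) hd] at hy
    refine inner_pow_circleExp_pos (norm_pos_iff.1 (one_pos.trans_le hy)) ?_
    have hle : ‖A y y - d * (f y).arg‖ ≤ d * (Real.pi / (4 * d)) :=
      norm_sum_smul_sub_le (ρ y) fun j hj => harg y (c j) (by linarith [hρ j y hj]) hy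
    rw [Real.norm_eq_abs] at hle
    have hd' : d * (Real.pi / (4 * d)) = Real.pi / 4 := by field_simp
    linarith [Real.pi_pos]

end Lift

end Roots

section TwistedSum

variable {n : ℕ}

theorem exists_perturbation_sub_notMem (t : Fin n → ℝ) {S : Set ℝ} (hS : S.Countable) {ε : ℝ}
    (hε : 0 < ε) : ∃ t' : Fin n → ℝ, (∀ j, |t' j - t j| ≤ ε) ∧ ∀ j k, j ≠ k → t' j - t' k ∉ S := by
  let bad : Set ℝ := ⋃ q : Fin n × Fin n, (fun s => (s - (t q.1 - t q.2)) / (q.1 - q.2 : ℝ)) '' S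
  have hbad : bad.Countable := countable_iUnion fun q => hS.image _
  have hpos : 0 < ε / (n + 1) := by positivity
  obtain ⟨τ, ⟨hτ0, hτ⟩, hτbad⟩ := (hbad.dense_compl ℝ).inter_open_nonempty _ isOpen_Ioo
    (nonempty_Ioo.2 hpos)
  refine ⟨fun j => t j + τ * j, fun j => ?_, fun j k hjk hmem => hτbad ?_⟩
  · have hj : (j : ℝ) ≤ n + 1 := by exact_mod_cast j.is_lt.le.trans n.le_succ
    rw [add_sub_cancel_left, abs_of_nonneg (by positivity)]
    exact (mul_le_mul_of_nonneg_left hj hτ0.le).trans ((lt_div_iff₀ (by positivity)).1 hτ).le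
  · have hjk' : (j - k : ℝ) ≠ 0 := sub_ne_zero.2 (by exact_mod_cast Fin.val_ne_of_ne hjk)
    refine mem_iUnion.2 ⟨(j, k), _, hmem, (div_eq_iff hjk').2 ?_⟩
    ring

theorem two_lt_card_carrier {ι E : Type*} [Fintype ι] [NormedAddCommGroup E] [NormedSpace ℝ E]
    {q : stdSimplex ℝ ι} {v : ι → E} (hv : ∀ i, ‖v i‖ = 1) (hneg : ∀ i j, i ≠ j → v i ≠ -v j)
    (h : ∑ i, q i • v i = 0) : 2 < (carrier q).card := by
  classical
  have hsum : ∑ i ∈ carrier q, q i • v i = 0 := by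
    rw [← h]
    exact Finset.sum_subset (Finset.subset_univ _) fun i _ hi => by
      rw [notMem_carrier.1 hi, zero_smul]
  have hpos : 0 < (carrier q).card := (carrier_nonempty q).card_pos
  have hnorm : ∀ i ∈ carrier q, ‖q i • v i‖ = q i := fun i _ => by
    rw [norm_smul, hv, mul_one, Real.norm_of_nonneg (stdSimplex.zero_le q i)]
  by_contra! hle
  obtain hcard | hcard : (carrier q).card = 1 ∨ (carrier q).card = 2 := by lia
  · obtain ⟨i, hi⟩ := Finset.card_eq_one.1 hcard
    have himem : i ∈ carrier q := by simp [hi]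
    rw [hi, Finset.sum_singleton] at hsum
    have := hnorm i himem
    rw [hsum, norm_zero] at this
    exact (mem_carrier.1 himem).ne this
  · obtain ⟨i, j, hij, hpair⟩ := Finset.card_eq_two.1 hcard
    have himem : i ∈ carrier q := by simp [hpair]
    have hjmem : j ∈ carrier q := by simp [hpair]
    rw [hpair, Finset.sum_pair hij] at hsum
    have heq := eq_neg_of_add_eq_zero_left hsum
    have hqij : q i = q j := by rw [← hnorm i himem, heq, norm_neg, hnorm j hjmem]
    rw [hqij, ← smul_neg] at heq
    exact hneg i j hij (smul_right_injective E (mem_carrier.1 hjmem).ne' heq)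

theorem eventually_carrier_eq {Y ι : Type*} [TopologicalSpace Y] [Fintype ι]
    {ρ : Y → stdSimplex ℝ ι} (hρ : Continuous ρ) {m : ℕ} (hm : ∀ y, (carrier (ρ y)).card ≤ m)
    {y : Y} (hy : (carrier (ρ y)).card = m) : ∀ᶠ z in nhds y, carrier (ρ z) = carrier (ρ y) := by
  have hsub : ∀ᶠ z in nhds y, ∀ i ∈ carrier (ρ y), 0 < ρ z i :=
    (eventually_all_finset _).2 fun i hi =>
      ((continuous_stdSimplex_apply i).comp hρ).continuousAt.eventually
        (lt_mem_nhds (mem_carrier.1 hi))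
  filter_upwards [hsub] with z hz
  exact (Finset.eq_of_subset_of_card_le (fun i hi => mem_carrier.2 (hz i hi))
    (hy ▸ hm z)).symm

theorem isOpen_card_carrier_eq {Y ι : Type*} [TopologicalSpace Y] [Fintype ι]
    {ρ : Y → stdSimplex ℝ ι} (hρ : Continuous ρ) {m : ℕ} (hm : ∀ y, (carrier (ρ y)).card ≤ m) :
    IsOpen {y | (carrier (ρ y)).card = m} := by
  refine isOpen_iff_mem_nhds.2 fun y hy => ?_
  filter_upwards [eventually_carrier_eq hρ hm hy] with z hz
  exact (congrArg Finset.card hz).trans hy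

/-- The weighted sum of the `p`-th roots of unit complex numbers of arguments `t j`, where `k j`
selects one of the `p` roots. -/
noncomputable def rootSum (p : ℕ) (t : Fin n → ℝ) (k : Fin n → ℤ) (q : stdSimplex ℝ (Fin n)) : ℂ :=
  ∑ j, q j • (Circle.exp ((t j - 2 * Real.pi * k j) / p) : ℂ)

theorem continuous_rootSum (p : ℕ) (t : Fin n → ℝ) (k : Fin n → ℤ) : Continuous (rootSum p t k) :=
  continuous_finsetSum _ fun j _ => (continuous_stdSimplex_apply j).smul continuous_const

theorem rootSum_pow_eq {p : ℕ} (hp : p ≠ 0) (t : Fin n → ℝ) {k k' : Fin n → ℤ} {a : ℤ}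
    {q : stdSimplex ℝ (Fin n)} (h : ∀ j, 0 < q j → (p : ℤ) ∣ k' j - k j + a) :
    rootSum p t k' q ^ p = rootSum p t k q ^ p := by
  have hp' : (p : ℝ) ≠ 0 := Nat.cast_ne_zero.2 hp
  have hfactor : rootSum p t k' q = Circle.exp (2 * Real.pi * a / p) * rootSum p t k q := by
    rw [rootSum, rootSum, Finset.mul_sum]
    simp only [mul_smul_comm]
    refine sum_smul_congr q fun j hj => ?_
    obtain ⟨l, hl⟩ := h j hj
    have hl' : (k' j - k j + a : ℝ) = p * l := by exact_mod_cast hl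
    rw [← Circle.coe_mul, ← Circle.exp_add]
    refine congrArg _ (Circle.exp_eq_exp.2 ⟨-l, ?_⟩)
    push_cast
    field_simp
    linear_combination -2 * Real.pi * hl'
  rw [hfactor, mul_pow, ← Circle.coe_pow, ← Circle.exp_natCast_mul, mul_div_cancel₀ _ hp',
    Circle.exp_two_pi_mul_int, Circle.coe_one, one_mul]

theorem two_lt_card_carrier_of_rootSum_eq_zero {p : ℕ} (hp : p ≠ 0) {t : Fin n → ℝ}
    (ht : ∀ i j, i ≠ j → t i - t j ∉ range fun m : ℤ => m * Real.pi) {k : Fin n → ℤ}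
    {q : stdSimplex ℝ (Fin n)} (h : rootSum p t k q = 0) : 2 < (carrier q).card := by
  have hp' : (p : ℝ) ≠ 0 := Nat.cast_ne_zero.2 hp
  refine two_lt_card_carrier (fun j => Circle.norm_coe _) (fun i j hij heq => ht i j hij ?_) h
  rw [← neg_one_mul, ← Complex.exp_pi_mul_I, ← Circle.coe_exp, ← Circle.coe_mul, ← Circle.exp_add,
    Circle.coe_inj, Circle.exp_eq_exp] at heq
  obtain ⟨m, hm⟩ := heq
  refine ⟨p + 2 * p * m + 2 * k i - 2 * k j, ?_⟩
  push_cast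
  field_simp at hm
  linear_combination -hm

theorem norm_rootSum_sub_le {p : ℕ} (hp : p ≠ 0) {t : Fin n → ℝ} {k : Fin n → ℤ}
    {q : stdSimplex ℝ (Fin n)} {θ ε : ℝ} (h : ∀ j, 0 < q j → |t j - 2 * Real.pi * k j - θ| ≤ ε) :
    ‖rootSum p t k q - Circle.exp (θ / p)‖ ≤ ε :=
  norm_sum_smul_sub_le q fun j hj => calc
    _ ≤ |(t j - 2 * Real.pi * k j) / p - θ / p| := norm_circleExp_sub_le _ _
    _ = |t j - 2 * Real.pi * k j - θ| / p := by rw [← sub_div, abs_div, Nat.abs_cast]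
    _ ≤ |t j - 2 * Real.pi * k j - θ| :=
      div_le_self (abs_nonneg _) (Nat.one_le_cast.2 (Nat.one_le_iff_ne_zero.2 hp))
    _ ≤ ε := h j hj

theorem exists_inner_rootSum_pow_pos {p : ℕ} (hp : p ≠ 0) : ∃ ε > 0, ∀ {n : ℕ} {t : Fin n → ℝ}
    {k : Fin n → ℤ} {q : stdSimplex ℝ (Fin n)} {z : ℂ}, z ≠ 0 →
    (∀ j, 0 < q j → |t j - 2 * Real.pi * k j - z.arg| ≤ ε) →
      0 < inner ℝ z (rootSum p t k q ^ p) := by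
  obtain ⟨r, hr, hpos⟩ := exists_inner_pow_pow_pos p
  refine ⟨r / 2, half_pos hr, fun {n t k q z} hz h => ?_⟩
  have hroot := hpos _ _ (Circle.norm_coe _) ((norm_rootSum_sub_le hp h).trans_lt (half_lt_self hr))
  rw [← Circle.coe_pow, ← Circle.exp_natCast_mul,
    mul_div_cancel₀ _ (Nat.cast_ne_zero.2 hp)] at hroot
  rw [← norm_smul_circleExp_arg z, real_inner_smul_left]
  exact mul_pos (norm_pos_iff.2 hz) hroot

-- The root exists where the carrier is locally constant, and generic arguments put all zeros there.
theorem HasCrossingCocycle.hasRootNearZeros {P : Type*} [PseudoMetricSpace P] [CompactSpace P]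
    [Nonempty P] (hP : topDim P ≤ 2) {p : ℕ} (hp : p ≠ 0) {f : P → ℂ} (hf : Continuous f)
    (h : HasCrossingCocycle p 1 f) : HasRootNearZeros p f := by
  obtain ⟨ε, hε, hpos⟩ := exists_inner_rootSum_pow_pos hp
  obtain ⟨η, hη, e, he, harg⟩ := h.exists_abs_arg_sub_le hf (half_pos hε)
  simp only [Nat.cast_one, one_mul] at harg
  obtain ⟨n, ρ, c, hcard, hρ⟩ := exists_fine_map_stdSimplex_centers hP (half_pos hη)
  obtain ⟨t, ht, hgen⟩ := exists_perturbation_sub_notMem (fun j => (f (c j)).arg)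
    (countable_range fun m : ℤ => m * Real.pi) (half_pos hε)
  let s : P → P → ℂ := fun b y => rootSum p t (e b ∘ c) (ρ y)
  have hs : ∀ b, Continuous (s b) := fun b => (continuous_rootSum p t _).comp ρ.continuous
  have hself : ∀ y : P, dist y y < η / 2 := fun y => by rw [dist_self]; exact half_pos hη
  have hspow : ∀ b b' y, dist b y < η / 2 → dist b' y < η / 2 → s b' y ^ p = s b y ^ p :=
    fun b b' y hb hb' => rootSum_pow_eq (a := e b b') hp t fun j hj => by
      have hyj := hρ j y hj
      exact he b b' (c j) (by linarith [dist_triangle_right b b' y])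
        (by linarith [dist_triangle b' y (c j)]) (by linarith [dist_triangle b y (c j)])
  have hzero : ∀ y, s y y ^ p = 0 → (carrier (ρ y)).card = 3 := fun y hy =>
    (hcard y).antisymm
      (two_lt_card_carrier_of_rootSum_eq_zero hp hgen (eq_zero_of_pow_eq_zero hy))
  let i : P → Fin n := fun y => (carrier (ρ y)).min' (carrier_nonempty _)
  have hi : ∀ y, dist y (c (i y)) < η / 2 := fun y =>
    hρ _ y (mem_carrier.1 (Finset.min'_mem _ _))
  refine ⟨fun y => s y y ^ p, {y | (carrier (ρ y)).card = 3}, fun y => s (c (i y)) y, ?_,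
    fun y hy => ?_, isOpen_card_carrier_eq ρ.continuous hcard, hzero, fun y hy => ?_,
    fun y _ => hspow y (c (i y)) y (hself y) (by rw [dist_comm]; exact hi y)⟩
  · exact continuous_diagonal (s := fun b y => s b y ^ p) (fun b => (hs b).pow p) (half_pos hη)
      fun b y hby => hspow y b y (hself y) hby
  · refine hpos (norm_pos_iff.1 (one_pos.trans_le hy)) fun j hj => ?_
    have hcj := abs_le.1 (harg y (c j) (by linarith [hρ j y hj]) hy)
    have htj := abs_le.1 (ht j)
    exact abs_le.2 ⟨by dsimp only [Function.comp_apply]; linarith,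
      by dsimp only [Function.comp_apply]; linarith⟩
  · refine ((hs (c (i y))).continuousAt.congr ?_).continuousWithinAt
    filter_upwards [eventually_carrier_eq ρ.continuous hcard hy] with z hz
    simp only [i, hz]

end TwistedSum

section Pontryagin

variable {P Q : Type*} [MetricSpace P] [CompactSpace P] [MetricSpace Q] [CompactSpace Q]

theorem nonempty_of_topDim_ne_zero (hP : topDim P ≠ 0) : Nonempty P := by
  by_contra! hempty
  exact hP (nonpos_iff_eq_zero.1 topDim_le_zero_of_totallyDisconnected)

theorem continuous_of_mem_realPair {f : X → ℂ} (hf : Continuous f) {g : X → ℝ}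
    (hg : g ∈ realPair f) : Continuous g := by
  obtain rfl | rfl : g = (fun x => (f x).re) ∨ g = fun x => -(f x).im := by
    simpa [realPair] using hg
  · exact Complex.continuous_re.comp hf
  · exact (Complex.continuous_im.comp hf).neg

theorem exists_isEssential_realPair (hP : topDim P ≤ 2) (hPP : 3 < topDim (P × P)) :
    ∃ (F : Type) (_ : Field F) (f : P → ℂ), Continuous f ∧ IsEssential F (realPair f) := by
  by_contra! hnot
  have : Nonempty P := (nonempty_prod.1 (nonempty_of_topDim_ne_zero (bot_lt_of_lt hPP).ne')).1
  refine hPP.not_ge (topDim_prod_le_three hP hP fun f f' hf hf' => ?_)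
  obtain ⟨d, hd, hd'⟩ := exists_hasCrossingCocycle_of_not_isEssential_rat
    (hnot ℚ inferInstance f' hf')
  obtain ⟨G', hG', hG'0, hGf'⟩ := hd'.exists_nonvanishing_follows hP hd hf'
  refine .of_forall_prime (fun p hp g hg => ?_) hd hf' hG' hG'0 hGf' hf
  have : Fact p.Prime := ⟨hp⟩
  have hcocycle := hasCrossingCocycle_of_not_isEssential_zmod (hnot (ZMod p) inferInstance g hg)
  exact hcocycle.hasRootNearZeros hP hp.ne_zero hg

theorem mdim_shift_eq_two (hP : topDim P = 2) (hPP : 3 < topDim (P × P))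
    {d : (ℤ → P) → (ℤ → P) → ℝ} (hd : IsCompatMetric d) : mdim (shift P) d = 2 := by
  have : Nonempty P := nonempty_of_topDim_ne_zero (by simp [hP])
  obtain ⟨F, _, f, hf, hess⟩ := exists_isEssential_realPair hP.le hPP
  exact (mdim_shift_le hP.le hd).antisymm
    (hess.length_le_mdim_shift (fun _ => continuous_of_mem_realPair hf) hd)

theorem mdim_shift_prodMap_eq_three (hP : topDim P = 2) (hPP : 3 < topDim (P × P))
    (hQ : topDim Q ≠ 0) (hPQ : topDim (P × Q) ≤ 3)
    {d : (ℤ → P) × (ℤ → Q) → (ℤ → P) × (ℤ → Q) → ℝ} (hd : IsCompatMetric d) :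
    mdim (Prod.map (shift P) (shift Q)) d = 3 := by
  have : Nonempty P := nonempty_of_topDim_ne_zero (by simp [hP])
  have : Nonempty Q := nonempty_of_topDim_ne_zero hQ
  obtain ⟨F, _, f, hf, hess⟩ := exists_isEssential_realPair hP.le hPP
  obtain ⟨g, hg, hess'⟩ := exists_isEssential_singleton F hQ
  refine (mdim_shift_prodMap_le hPQ hd).antisymm
    ((hess.prod hess').length_le_mdim_shift_prodMap (fun h hh => ?_) hd)
  rcases List.mem_append.1 hh with hh | hh
  · obtain ⟨g', hg', rfl⟩ := List.mem_map.1 hh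
    exact (continuous_of_mem_realPair hf hg').comp continuous_fst
  · obtain rfl := List.mem_singleton.1 hh
    exact hg.comp continuous_snd

theorem mdim_fullshift_pontryagin_general (hP : topDim P = 2) (hQ : topDim Q = 2)
    (hPQ : topDim (P × Q) ≤ 3) (hPP : 3 < topDim (P × P)) (hQQ : 3 < topDim (Q × Q))
    {d₁ : (ℤ → P) → (ℤ → P) → ℝ} (hd₁ : IsCompatMetric d₁)
    {d₂ : (ℤ → Q) → (ℤ → Q) → ℝ} (hd₂ : IsCompatMetric d₂)
    {d₃ : ((ℤ → P) × (ℤ → Q)) → ((ℤ → P) × (ℤ → Q)) → ℝ} (hd₃ : IsCompatMetric d₃) :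
    mdim (shift P) d₁ = 2 ∧ mdim (shift Q) d₂ = 2 ∧
      mdim (Prod.map (shift P) (shift Q)) d₃ = 3 ∧
      mdim (Prod.map (shift P) (shift Q)) d₃ <
        mdim (shift P) d₁ + mdim (shift Q) d₂ := by
  have h₁ := mdim_shift_eq_two hP hPP hd₁
  have h₂ := mdim_shift_eq_two hQ hQQ hd₂
  have h₃ := mdim_shift_prodMap_eq_three hP hPP (by simp [hQ]) hPQ hd₃
  refine ⟨h₁, h₂, h₃, ?_⟩
  rw [h₁, h₂, h₃]
  norm_num

end Pontryagin

/-- for compact metric spaces `P`, `Q` with `dim P = dim Q = 2`,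
`dim (P × Q) = 3`, and `P`, `Q`, `P × Q` all of basic type (e.g. the Pontryagin
surfaces), the full shifts satisfy `mdim(P^ℤ, σ₁) = mdim(Q^ℤ, σ₂) = 2` and
`mdim(P^ℤ × Q^ℤ, σ₁ × σ₂) = 3`; in particular the product inequality for mean
dimension is strict here. -/
theorem mdim_fullshift_pontryagin {P Q : Type*}
    [MetricSpace P] [CompactSpace P] [MetricSpace Q] [CompactSpace Q]
    (hP : topDim P = 2) (hQ : topDim Q = 2) (hPQ : topDim (P × Q) = 3)
    (hPb : topDim (P × P) = 2 * topDim P) (hQb : topDim (Q × Q) = 2 * topDim Q)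
    (hPQb : topDim ((P × Q) × (P × Q)) = 2 * topDim (P × Q))
    (d₁ : (ℤ → P) → (ℤ → P) → ℝ) (hd₁ : IsCompatMetric d₁)
    (d₂ : (ℤ → Q) → (ℤ → Q) → ℝ) (hd₂ : IsCompatMetric d₂)
    (d₃ : ((ℤ → P) × (ℤ → Q)) → ((ℤ → P) × (ℤ → Q)) → ℝ) (hd₃ : IsCompatMetric d₃) :
    mdim (shift P) d₁ = 2 ∧ mdim (shift Q) d₂ = 2 ∧
      mdim (Prod.map (shift P) (shift Q)) d₃ = 3 ∧
      mdim (Prod.map (shift P) (shift Q)) d₃ <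
        mdim (shift P) d₁ + mdim (shift Q) d₂ :=
  mdim_fullshift_pontryagin_general hP hQ hPQ.le (by rw [hPb, hP]; norm_num)
    (by rw [hQb, hQ]; norm_num) hd₁ hd₂ hd₃

end MeanDimPaper
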